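/- Let s>7/2 be an integer and α a multi-index with 1≤|α|≤s, and let μ>0, λ∈ℝ with 2μ+3λ>0. Suppose ρ⁰∈H^{s+1}(𝕋³) with ‖ρ⁰‖_{H^{s+1}}≤K and ρ⁰≥ρ̂>0; let N∈H^s(𝕋³) with N+ρ⁰≥ρ̂/2 on 𝕋³, U∈H^s(𝕋³;ℝ³) and Θ∈H^{s+1}(𝕋³). Then for every η>0 there is a constant C_η=C(η,s,K,ρ̂,μ,λ) such that ⟨∂^α_x{(1/(N+ρ⁰))(2μ|D(U)|²+λ(div U)²)}, ∂^α_xΘ⟩_{L²(𝕋³)} ≤ η‖∇∂^α_xΘ‖²_{L²} + C_η(‖(N,U)‖⁴_{H^s} + ‖(N,U)‖^{2(s+1)}_{H^s}). -/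

import Mathlib

open MeasureTheory Real
open scoped ENNReal

noncomputable section

/-! ### Basic setup: periodic fields on the torus `𝕋³ = (ℝ/2πℤ)³`

Functions on the torus are modelled as `2π`-periodic functions on `ℝ³`,
with all integrals (`L²` and `H^s` norms, inner products) taken over the
fundamental cube `Q3 = [0,2π]³`. -/

/-- A point of space `ℝ³`. -/
abbrev Pt : Type := Fin 3 → ℝ

/-- Scalar fields. -/
abbrev SF : Type := Pt → ℝ

/-- Vector fields, componentwise. -/
abbrev VF : Type := Fin 3 → SF

/-- The fundamental cube `[0,2π]³` of the torus. -/
def Q3 : Set Pt := Set.univ.pi fun _ => Set.Icc 0 (2 * π)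

/-- `2π`-periodicity in each coordinate: such a function descends to `𝕋³`. -/
def PerS (f : SF) : Prop := ∀ (x : Pt) (i : Fin 3), f (x + Pi.single i (2 * π)) = f x

/-- Componentwise periodicity of a vector field. -/
def PerV (v : VF) : Prop := ∀ i, PerS (v i)

/-- SmoothS scalar field (proxy for membership in the Sobolev spaces `H^k(𝕋³)`,
together with periodicity). -/
abbrev SmoothS (f : SF) : Prop := ContDiff ℝ (⊤ : ℕ∞) f

/-- SmoothS vector field. -/
abbrev SmoothV (v : VF) : Prop := ∀ i, ContDiff ℝ (⊤ : ℕ∞) (v i)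

/-- Partial derivative `∂_i`. -/
def pd (i : Fin 3) (f : SF) : SF := fun x => fderiv ℝ f x (Pi.single i 1)

/-- Iterated partial derivative in a fixed direction. -/
def pdIter (i : Fin 3) : ℕ → SF → SF
  | 0, f => f
  | n + 1, f => pd i (pdIter i n f)

/-- The spatial derivative `∂^α_x` for a multi-index `α`. -/
def mderiv (α : Fin 3 → ℕ) (f : SF) : SF :=
  pdIter 0 (α 0) (pdIter 1 (α 1) (pdIter 2 (α 2) f))

/-- `∂^α_x` of a vector field, componentwise. -/
def mderivV (α : Fin 3 → ℕ) (v : VF) : VF := fun i => mderiv α (v i)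

/-- `L²(𝕋³)` norm of a scalar field. -/
def L2 (f : SF) : ℝ := (∫ x in Q3, (f x) ^ 2) ^ (1/2 : ℝ)

/-- `L²(𝕋³)` norm of a vector field. -/
def L2V (v : VF) : ℝ := (∫ x in Q3, ∑ i, (v i x) ^ 2) ^ (1/2 : ℝ)

/-- `L²(𝕋³)` inner product of scalar fields. -/
def ip (f g : SF) : ℝ := ∫ x in Q3, f x * g x

/-- `L²(𝕋³)` inner product of vector fields. -/
def ipV (v w : VF) : ℝ := ∫ x in Q3, ∑ i, v i x * w i x

/-- The finite set of multi-indices `α` with `|α| ≤ s`. -/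
def midx (s : ℕ) : Finset (Fin 3 → ℕ) :=
  (Fintype.piFinset fun _ => Finset.range (s + 1)).filter fun α => (∑ i, α i) ≤ s

/-- `H^s(𝕋³)` norm of a scalar field. -/
def HsNorm (s : ℕ) (f : SF) : ℝ := (∑ α ∈ midx s, (L2 (mderiv α f)) ^ 2) ^ (1/2 : ℝ)

/-- `H^s(𝕋³)` norm of a vector field. -/
def HsNormV (s : ℕ) (v : VF) : ℝ := (∑ i, (HsNorm s (v i)) ^ 2) ^ (1/2 : ℝ)

/-! ### Differential operators -/

/-- Gradient of a scalar field. -/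
def grad (f : SF) : VF := fun i => pd i f

/-- Divergence of a vector field. -/
def divv (v : VF) : SF := fun x => ∑ i, pd i (v i) x

/-- Laplacian of a scalar field. -/
def lap (f : SF) : SF := fun x => ∑ i, pd i (pd i f) x

/-- Curl of a vector field. -/
def curl (v : VF) : VF :=
  ![fun x => pd 1 (v 2) x - pd 2 (v 1) x,
    fun x => pd 2 (v 0) x - pd 0 (v 2) x,
    fun x => pd 0 (v 1) x - pd 1 (v 0) x]

/-- Cross product of vector fields. -/
def cross (a b : VF) : VF :=
  ![fun x => a 1 x * b 2 x - a 2 x * b 1 x,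
    fun x => a 2 x * b 0 x - a 0 x * b 2 x,
    fun x => a 0 x * b 1 x - a 1 x * b 0 x]

/-- Pointwise dot product of vector fields. -/
def vdot (a b : VF) : SF := fun x => ∑ i, a i x * b i x

/-- Pointwise squared Euclidean norm `|a|²` of a vector field. -/
def normSq (a : VF) : SF := fun x => ∑ i, (a i x) ^ 2

/-- Convective derivative `(u·∇)f`. -/
def conv (u : VF) (f : SF) : SF := fun x => ∑ i, u i x * pd i f x

/-- Convective derivative `(u·∇)v` of a vector field, componentwise. -/
def convV (u v : VF) : VF := fun j => conv u (v j)

/-- Symmetric gradient `D(u) = (∇u + ∇uᵀ)/2`, entrywise. -/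
def Dsym (u : VF) (i j : Fin 3) : SF := fun x => (pd j (u i) x + pd i (u j) x) / 2

/-- Squared Frobenius norm `|D(u)|²`. -/
def DabsSq (u : VF) : SF := fun x => ∑ i, ∑ j, (Dsym u i j x) ^ 2

/-- Squared Frobenius norm `|∇v|²` of the Jacobian of a vector field. -/
def gradSq (v : VF) : SF := fun x => ∑ i, ∑ j, (pd j (v i) x) ^ 2

/-- Squared Euclidean norm `|∇f|²` of the gradient of a scalar field. -/
def gradSqS (f : SF) : SF := fun x => ∑ i, (pd i f x) ^ 2

/-- Viscous stress tensor `Ψ(u) = 2μ D(u) + λ (div u) I₃`, entrywise. -/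
def Psi (μ lam : ℝ) (u : VF) (i j : Fin 3) : SF :=
  fun x => 2 * μ * Dsym u i j x + lam * divv u x * (if i = j then 1 else 0)

/-- `div Ψ(u)`, componentwise. -/
def divPsi (μ lam : ℝ) (u : VF) : VF := fun i => fun x => ∑ j, pd j (Psi μ lam u i j) x

/-- The viscous dissipation `Ψ(u):∇u = 2μ|D(u)|² + λ(div u)²`. -/
def PsiColon (μ lam : ℝ) (u : VF) : SF :=
  fun x => ∑ i, ∑ j, Psi μ lam u i j x * pd j (u i) x

/-- Pointwise time derivative of a time-dependent scalar field. -/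
def dt (f : ℝ → SF) : ℝ → SF := fun t x => deriv (fun τ => f τ x) t

/-- Pointwise time derivative of a time-dependent vector field. -/
def dtV (v : ℝ → VF) : ℝ → VF := fun t i x => deriv (fun τ => v τ i x) t

/-- The time interval `[0, T)` for `T ∈ (0, +∞]`. -/
def Dom (T : ℝ≥0∞) : Set ℝ := {t : ℝ | 0 ≤ t ∧ ENNReal.ofReal t < T}

/-- Continuity in time with values in `H^k(𝕋³)` on a time set `D`
(the class `C⁰(D, H^k)`). -/
def ContHs (k : ℕ) (D : Set ℝ) (f : ℝ → SF) : Prop :=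
  ∀ t₀ ∈ D, ∀ ε > (0:ℝ), ∃ δ > (0:ℝ), ∀ t ∈ D, |t - t₀| < δ →
    HsNorm k (fun x => f t x - f t₀ x) < ε

/-- `C⁰(D, H^k)` for vector fields. -/
def ContHsV (k : ℕ) (D : Set ℝ) (v : ℝ → VF) : Prop := ∀ i, ContHs k D fun t => v t i

/-! ### The full compressible MHD system and the electromagnetic fluid system -/

/-- Classical solution of the full compressible MHD system
`∂_tρ + div(ρu) = 0`,
`ρ(∂_tu + u·∇u) + ∇(ρθ) = div Ψ(u) + curl H × H`,
`ρ(∂_tθ + u·∇θ) + ρθ div u = κΔθ + Ψ(u):∇u + |curl H|²`,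
`∂_tH − curl(u×H) = −curl(curl H)`, `div H = 0`
on the torus, on the time set `D` (all physical constants `𝔯 = c_V = σ = μ₀ = 1`). -/
structure IsMHDSol (μ lam κ : ℝ) (D : Set ℝ) (ρ θ : ℝ → SF) (u H : ℝ → VF) : Prop where
  perρ : ∀ t ∈ D, PerS (ρ t)
  perθ : ∀ t ∈ D, PerS (θ t)
  peru : ∀ t ∈ D, PerV (u t)
  perH : ∀ t ∈ D, PerV (H t)
  smρ : ∀ t ∈ D, SmoothS (ρ t)
  smθ : ∀ t ∈ D, SmoothS (θ t)
  smu : ∀ t ∈ D, SmoothV (u t)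
  smH : ∀ t ∈ D, SmoothV (H t)
  tdρ : ∀ (x : Pt), ∀ t ∈ D, DifferentiableAt ℝ (fun τ => ρ τ x) t
  tdθ : ∀ (x : Pt), ∀ t ∈ D, DifferentiableAt ℝ (fun τ => θ τ x) t
  tdu : ∀ (i : Fin 3) (x : Pt), ∀ t ∈ D, DifferentiableAt ℝ (fun τ => u τ i x) t
  tdH : ∀ (i : Fin 3) (x : Pt), ∀ t ∈ D, DifferentiableAt ℝ (fun τ => H τ i x) t
  mass : ∀ t ∈ D, ∀ x, dt ρ t x + divv (fun i y => ρ t y * u t i y) x = 0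
  mom : ∀ t ∈ D, ∀ x, ∀ i,
    ρ t x * (dtV u t i x + convV (u t) (u t) i x) + pd i (fun y => ρ t y * θ t y) x
      = divPsi μ lam (u t) i x + cross (curl (H t)) (H t) i x
  temp : ∀ t ∈ D, ∀ x,
    ρ t x * (dt θ t x + conv (u t) (θ t) x) + ρ t x * θ t x * divv (u t) x
      = κ * lap (θ t) x + PsiColon μ lam (u t) x + normSq (curl (H t)) x
  induction : ∀ t ∈ D, ∀ x, ∀ i,
    dtV H t i x - curl (cross (u t) (H t)) i x = - curl (curl (H t)) i x
  divH : ∀ t ∈ D, ∀ x, divv (H t) x = 0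

/-- Classical solution of the electromagnetic fluid system with dielectric
constant `ε > 0`:
`∂_tρ + div(ρu) = 0`,
`ρ(∂_tu + u·∇u) + ∇(ρθ) = div Ψ(u) + (E + u×H) × H`,
`ρ(∂_tθ + u·∇θ) + ρθ div u = κΔθ + Ψ(u):∇u + |E + u×H|²`,
`ε∂_tE − curl H + E + u×H = 0`,
`∂_tH + curl E = 0`, `div H = 0`
on the torus, on the time set `D`. -/
structure IsEMSol (μ lam κ eps : ℝ) (D : Set ℝ) (ρ θ : ℝ → SF) (u E H : ℝ → VF) : Prop where
  perρ : ∀ t ∈ D, PerS (ρ t)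
  perθ : ∀ t ∈ D, PerS (θ t)
  peru : ∀ t ∈ D, PerV (u t)
  perE : ∀ t ∈ D, PerV (E t)
  perH : ∀ t ∈ D, PerV (H t)
  smρ : ∀ t ∈ D, SmoothS (ρ t)
  smθ : ∀ t ∈ D, SmoothS (θ t)
  smu : ∀ t ∈ D, SmoothV (u t)
  smE : ∀ t ∈ D, SmoothV (E t)
  smH : ∀ t ∈ D, SmoothV (H t)
  tdρ : ∀ (x : Pt), ∀ t ∈ D, DifferentiableAt ℝ (fun τ => ρ τ x) t
  tdθ : ∀ (x : Pt), ∀ t ∈ D, DifferentiableAt ℝ (fun τ => θ τ x) t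
  tdu : ∀ (i : Fin 3) (x : Pt), ∀ t ∈ D, DifferentiableAt ℝ (fun τ => u τ i x) t
  tdE : ∀ (i : Fin 3) (x : Pt), ∀ t ∈ D, DifferentiableAt ℝ (fun τ => E τ i x) t
  tdH : ∀ (i : Fin 3) (x : Pt), ∀ t ∈ D, DifferentiableAt ℝ (fun τ => H τ i x) t
  mass : ∀ t ∈ D, ∀ x, dt ρ t x + divv (fun i y => ρ t y * u t i y) x = 0
  mom : ∀ t ∈ D, ∀ x, ∀ i,
    ρ t x * (dtV u t i x + convV (u t) (u t) i x) + pd i (fun y => ρ t y * θ t y) x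
      = divPsi μ lam (u t) i x
        + cross (fun j y => E t j y + cross (u t) (H t) j y) (H t) i x
  temp : ∀ t ∈ D, ∀ x,
    ρ t x * (dt θ t x + conv (u t) (θ t) x) + ρ t x * θ t x * divv (u t) x
      = κ * lap (θ t) x + PsiColon μ lam (u t) x
        + normSq (fun j y => E t j y + cross (u t) (H t) j y) x
  faraday : ∀ t ∈ D, ∀ x, ∀ i,
    eps * dtV E t i x - curl (H t) i x + E t i x + cross (u t) (H t) i x = 0
  ampere : ∀ t ∈ D, ∀ x, ∀ i, dtV H t i x + curl (E t) i x = 0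
  divH : ∀ t ∈ D, ∀ x, divv (H t) x = 0

/-- The electric field `E⁰ = curl H⁰ − u⁰ × H⁰` induced by the limiting MHD flow. -/
def Efield (u H : VF) : VF := fun i x => curl H i x - cross u H i x

/-- `(N,U,Θ,F,G)` solves the error system obtained by subtracting the full
compressible MHD equations (background solution `(ρ⁰,u⁰,θ⁰,H⁰)`, with induced
electric field `E⁰ = curl H⁰ − u⁰×H⁰`) from the `ε`-dielectric electromagnetic
fluid system: equivalently, `(ρ⁰+N, u⁰+U, θ⁰+Θ, E⁰+F, H⁰+G)` solves the
electromagnetic fluid system. -/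
def IsErrSol (μ lam κ eps : ℝ) (D : Set ℝ) (ρ0 θ0 : ℝ → SF) (u0 H0 : ℝ → VF)
    (N Θ : ℝ → SF) (U F G : ℝ → VF) : Prop :=
  IsEMSol μ lam κ eps D
    (fun t x => ρ0 t x + N t x) (fun t x => θ0 t x + Θ t x)
    (fun t i x => u0 t i x + U t i x)
    (fun t i x => Efield (u0 t) (H0 t) i x + F t i x)
    (fun t i x => H0 t i x + G t i x)

/-- The error-system energy `‖ℰ‖_s = ‖(N,U,Θ,G)‖_s` (sum of the `H^s` norms). -/
def Enorm (s : ℕ) (N Θ : SF) (U G : VF) : ℝ :=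
  HsNorm s N + HsNormV s U + HsNorm s Θ + HsNormV s G

/-- The squared `ε`-weighted energy `⫴ℰ⫴²_s = ‖ℰ‖²_s + ε‖F‖²_s`. -/
def EnormSq (s : ℕ) (eps : ℝ) (N Θ : SF) (U F G : VF) : ℝ :=
  (Enorm s N Θ U G) ^ 2 + eps * (HsNormV s F) ^ 2

end


/-! ### Words of derivatives -/

/-- Iterated partial derivative along a word of directions. -/
noncomputable def dW : List (Fin 3) → SF → SF
  | [], f => f
  | i :: l, f => pd i (dW l f)

lemma pd_smooth {f : SF} (hf : SmoothS f) (i : Fin 3) : SmoothS (pd i f) := by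
  unfold pd SmoothS
  exact (hf.fderiv_right (m := ((⊤ : ℕ∞) : WithTop ℕ∞)) (by simp)).clm_apply contDiff_const

lemma dW_smooth {f : SF} (hf : SmoothS f) (l : List (Fin 3)) : SmoothS (dW l f) := by
  induction l with
  | nil => exact hf
  | cons i l ih => exact pd_smooth ih i

lemma smooth_diff {f : SF} (hf : SmoothS f) (x : Pt) : DifferentiableAt ℝ f x :=
  (ContDiff.differentiable hf (by simp)) x

lemma pd_comm {f : SF} (hf : SmoothS f) (i j : Fin 3) : pd i (pd j f) = pd j (pd i f) := by
  funext x
  have hd : DifferentiableAt ℝ (fderiv ℝ f) x :=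
    ((hf.fderiv_right (m := ((⊤ : ℕ∞) : WithTop ℕ∞)) (by simp)).differentiable (by simp)) x
  have key : ∀ a b : Fin 3, pd a (pd b f) x
      = fderiv ℝ (fderiv ℝ f) x (Pi.single a 1) (Pi.single b 1) := by
    intro a b
    unfold pd
    rw [fderiv_clm_apply hd (by fun_prop)]
    simp
  rw [key, key]
  have hsym : IsSymmSndFDerivAt ℝ f x :=
    (hf.contDiffAt).isSymmSndFDerivAt (by simp [minSmoothness_of_isRCLikeNormedField]; exact WithTop.coe_le_coe.2 (le_top : (2 : ℕ∞) ≤ ⊤))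
  exact hsym _ _

lemma dW_perm {f : SF} (hf : SmoothS f) {l l' : List (Fin 3)} (h : l.Perm l') :
    dW l f = dW l' f := by
  induction h with
  | nil => rfl
  | cons i _ ih => simp only [dW, ih]
  | swap i j l => exact pd_comm (dW_smooth hf l) _ _
  | trans _ _ h1 h2 => exact h1.trans h2

lemma dW_append (l l' : List (Fin 3)) (f : SF) : dW (l ++ l') f = dW l (dW l' f) := by
  induction l with
  | nil => rfl
  | cons i l ih => simp only [List.cons_append, dW, ih]

lemma pdIter_eq (i : Fin 3) (n : ℕ) (f : SF) : pdIter i n f = dW (List.replicate n i) f := by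
  induction n with
  | zero => rfl
  | succ n ih => simp only [List.replicate_succ, dW, pdIter, ih]

/-- The canonical word of a multi-index. -/
def mword (α : Fin 3 → ℕ) : List (Fin 3) :=
  List.replicate (α 0) 0 ++ (List.replicate (α 1) 1 ++ List.replicate (α 2) 2)

lemma mderiv_eq (α : Fin 3 → ℕ) (f : SF) : mderiv α f = dW (mword α) f := by
  simp only [mderiv, mword, dW_append, pdIter_eq]

lemma mword_length (α : Fin 3 → ℕ) : (mword α).length = ∑ i, α i := by
  simp [mword, Fin.sum_univ_three, add_assoc]

lemma mword_count (l : List (Fin 3)) : l.Perm (mword fun i => l.count i) := by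
  rw [List.perm_iff_count]
  intro a
  fin_cases a <;> simp [mword, List.count_replicate]

lemma dW_eq_mderiv {f : SF} (hf : SmoothS f) (l : List (Fin 3)) :
    dW l f = mderiv (fun i => l.count i) f := by
  rw [mderiv_eq]; exact dW_perm hf (mword_count l)

lemma count_mem_midx {s : ℕ} (l : List (Fin 3)) (hl : l.length ≤ s) :
    (fun i => l.count i) ∈ midx s := by
  have h1 : ∑ i, l.count i = l.length := by
    rw [← mword_length (fun i => l.count i)]; exact (mword_count l).length_eq.symm
  simp only [midx, Finset.mem_filter, Fintype.mem_piFinset, Finset.mem_range]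
  refine ⟨fun i => ?_, by omega⟩
  have := List.count_le_length (a := i) (l := l)
  omega

/-! ### Integrals over the cube -/

lemma Q3_eq : Q3 = Set.Icc (0 : Pt) (fun _ => 2 * π) := by
  unfold Q3
  rw [← Set.pi_univ_Icc]; rfl

lemma Q3_compact : IsCompact Q3 := by rw [Q3_eq]; exact isCompact_Icc

lemma Q3_meas : MeasurableSet Q3 := Q3_compact.measurableSet

lemma Q3_convex : Convex ℝ Q3 := by rw [Q3_eq]; exact convex_Icc _ _

lemma int_on {f : SF} (hf : Continuous f) : IntegrableOn f Q3 :=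
  hf.continuousOn.integrableOn_compact Q3_compact

lemma sm_int {f : SF} (hf : SmoothS f) : IntegrableOn f Q3 := int_on hf.continuous

lemma half_sq {a : ℝ} (ha : 0 ≤ a) : (a ^ (1/2 : ℝ)) ^ 2 = a := by
  rw [← Real.sqrt_eq_rpow, Real.sq_sqrt ha]

lemma L2_sq (f : SF) : L2 f ^ 2 = ∫ x in Q3, f x ^ 2 :=
  half_sq (integral_nonneg fun _ => sq_nonneg _)

lemma L2V_sq (f : VF) : L2V f ^ 2 = ∫ x in Q3, ∑ i, f i x ^ 2 :=
  half_sq (integral_nonneg fun _ => Finset.sum_nonneg fun _ _ => sq_nonneg _)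

lemma Hs_sq (s : ℕ) (f : SF) : HsNorm s f ^ 2 = ∑ α ∈ midx s, L2 (mderiv α f) ^ 2 :=
  half_sq (Finset.sum_nonneg fun _ _ => sq_nonneg _)

lemma HsV_sq (s : ℕ) (f : VF) : HsNormV s f ^ 2 = ∑ i, HsNorm s (f i) ^ 2 :=
  half_sq (Finset.sum_nonneg fun _ _ => sq_nonneg _)

lemma Hs_nonneg (s : ℕ) (f : SF) : 0 ≤ HsNorm s f :=
  Real.rpow_nonneg (Finset.sum_nonneg fun _ _ => sq_nonneg _) _

lemma HsV_nonneg (s : ℕ) (f : VF) : 0 ≤ HsNormV s f :=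
  Real.rpow_nonneg (Finset.sum_nonneg fun _ _ => sq_nonneg _) _

/-- The `H^s` density. -/
noncomputable def JJ (s : ℕ) (f : SF) : SF := fun x => ∑ α ∈ midx s, (mderiv α f x) ^ 2

lemma mderiv_smooth {f : SF} (hf : SmoothS f) (α : Fin 3 → ℕ) : SmoothS (mderiv α f) := by
  rw [mderiv_eq]; exact dW_smooth hf _

lemma JJ_nonneg (s : ℕ) (f : SF) (x : Pt) : 0 ≤ JJ s f x :=
  Finset.sum_nonneg fun _ _ => sq_nonneg _

lemma JJ_cont (s : ℕ) {f : SF} (hf : SmoothS f) : Continuous (JJ s f) := by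
  unfold JJ
  exact continuous_finsetSum _ fun α _ => ((mderiv_smooth hf α).continuous).pow 2

lemma JJ_int (s : ℕ) {f : SF} (hf : SmoothS f) : ∫ x in Q3, JJ s f x = HsNorm s f ^ 2 := by
  rw [Hs_sq]
  unfold JJ
  rw [integral_finsetSum]
  · simp only [L2_sq]
  · intro α _
    exact int_on (((mderiv_smooth hf α).continuous).pow 2)

lemma dW_sq_le_JJ {s : ℕ} {f : SF} (hf : SmoothS f) (l : List (Fin 3)) (hl : l.length ≤ s)
    (x : Pt) : (dW l f x) ^ 2 ≤ JJ s f x := by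
  rw [dW_eq_mderiv hf]
  exact Finset.single_le_sum (f := fun α => (mderiv α f x) ^ 2) (fun _ _ => sq_nonneg _)
    (count_mem_midx l hl)

lemma dW_int_le {s : ℕ} {f : SF} (hf : SmoothS f) (l : List (Fin 3)) (hl : l.length ≤ s) :
    ∫ x in Q3, (dW l f x) ^ 2 ≤ HsNorm s f ^ 2 := by
  rw [← JJ_int s hf]
  exact setIntegral_mono (int_on ((dW_smooth hf l).continuous.pow 2)) (int_on (JJ_cont s hf))
    fun x => dW_sq_le_JJ hf l hl x

/-! ### Algebra of derivatives -/

lemma pd_add {f g : SF} (hf : SmoothS f) (hg : SmoothS g) (i : Fin 3) :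
    pd i (f + g) = pd i f + pd i g := by
  funext x
  simp only [pd, Pi.add_apply]
  rw [fderiv_add (smooth_diff hf x) (smooth_diff hg x)]; rfl

lemma pd_smul {f : SF} (hf : SmoothS f) (c : ℝ) (i : Fin 3) :
    pd i (c • f) = c • pd i f := by
  funext x
  simp only [pd, Pi.smul_apply]
  rw [fderiv_const_smul (smooth_diff hf x)]; rfl

lemma pd_mul {f g : SF} (hf : SmoothS f) (hg : SmoothS g) (i : Fin 3) :
    pd i (f * g) = f * pd i g + pd i f * g := by
  funext x
  simp only [pd, Pi.add_apply, Pi.mul_apply]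
  rw [fderiv_mul (smooth_diff hf x) (smooth_diff hg x)]
  simp; ring

lemma pd_const (c : ℝ) (i : Fin 3) : pd i (fun _ => c) = fun _ => 0 := by
  funext x; simp [pd]

lemma dW_const_zero (l : List (Fin 3)) : dW l (fun _ => (0 : ℝ)) = fun _ => 0 := by
  induction l with
  | nil => rfl
  | cons i l ih => simp only [dW, ih, pd_const]

lemma dW_one (l : List (Fin 3)) (hl : l ≠ []) : dW l (fun _ => (1 : ℝ)) = fun _ => 0 := by
  induction l with
  | nil => exact absurd rfl hl
  | cons i l ih =>
    by_cases h : l = []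
    · subst h; simp only [dW, pd_const]
    · simp only [dW, ih h, pd_const]

lemma dW_add {f g : SF} (hf : SmoothS f) (hg : SmoothS g) (l : List (Fin 3)) :
    dW l (f + g) = dW l f + dW l g := by
  induction l with
  | nil => rfl
  | cons i l ih => simp only [dW, ih, pd_add (dW_smooth hf l) (dW_smooth hg l)]

lemma dW_smul {f : SF} (hf : SmoothS f) (c : ℝ) (l : List (Fin 3)) :
    dW l (c • f) = c • dW l f := by
  induction l with
  | nil => rfl
  | cons i l ih => simp only [dW, ih, pd_smul (dW_smooth hf l)]

lemma smooth_mul {f g : SF} (hf : SmoothS f) (hg : SmoothS g) : SmoothS (f * g) :=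
  ContDiff.mul hf hg

lemma smooth_add {f g : SF} (hf : SmoothS f) (hg : SmoothS g) : SmoothS (f + g) :=
  ContDiff.add hf hg

lemma smooth_smul {f : SF} (hf : SmoothS f) (c : ℝ) : SmoothS (c • f) :=
  contDiff_const.smul hf

lemma smooth_sum {ι : Type*} (S : Finset ι) (f : ι → SF) (hf : ∀ i ∈ S, SmoothS (f i)) :
    SmoothS (∑ i ∈ S, f i) := by
  have : (∑ i ∈ S, f i) = fun x => ∑ i ∈ S, f i x := by funext x; simp
  rw [this]
  exact ContDiff.sum hf

lemma dW_sum {ι : Type*} (S : Finset ι) (f : ι → SF) (hf : ∀ i, SmoothS (f i))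
    (l : List (Fin 3)) : dW l (∑ i ∈ S, f i) = ∑ i ∈ S, dW l (f i) := by
  classical
  induction S using Finset.induction_on with
  | empty => exact dW_const_zero l
  | insert a S ha ih =>
    rw [Finset.sum_insert ha, Finset.sum_insert ha,
      dW_add (hf a) (smooth_sum S f fun i _ => hf i), ih]

/-- All ways of distributing the letters of a word. -/
def splits : List (Fin 3) → List (List (Fin 3) × List (Fin 3))
  | [] => [([], [])]
  | i :: l => (splits l).map (fun p => (p.1, i :: p.2)) ++ (splits l).map (fun p => (i :: p.1, p.2))

lemma splits_length (l : List (Fin 3)) : (splits l).length = 2 ^ l.length := by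
  induction l with
  | nil => rfl
  | cons i l ih => simp [splits, ih]; ring

lemma splits_sum {l : List (Fin 3)} : ∀ p ∈ splits l, p.1.length + p.2.length = l.length := by
  induction l with
  | nil => simp [splits]
  | cons i l ih =>
    intro p hp
    simp only [splits, List.mem_append, List.mem_map] at hp
    rcases hp with ⟨q, hq, rfl⟩ | ⟨q, hq, rfl⟩ <;> have := ih q hq <;> simp <;> omega

lemma splits_rest (l : List (Fin 3)) : ∃ r, splits l = ([], l) :: r ∧ ∀ p ∈ r, p.1 ≠ [] := by
  induction l with
  | nil => exact ⟨[], rfl, by simp⟩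
  | cons i l ih =>
    obtain ⟨r, hr, h⟩ := ih
    refine ⟨r.map (fun p => (p.1, i :: p.2)) ++ (splits l).map (fun p => (i :: p.1, p.2)), ?_, ?_⟩
    · simp only [splits, hr, List.map_cons, List.cons_append]
    · intro p hp
      simp only [List.mem_append, List.mem_map] at hp
      rcases hp with ⟨q, hq, rfl⟩ | ⟨q, hq, rfl⟩
      · exact h q hq
      · simp

lemma pd_listsum (L : List (List (Fin 3) × List (Fin 3))) {f g : SF} (hf : SmoothS f)
    (hg : SmoothS g) (i : Fin 3) :
    SmoothS ((L.map fun p => dW p.1 f * dW p.2 g).sum) ∧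
    pd i ((L.map fun p => dW p.1 f * dW p.2 g).sum)
      = ((L.map fun p => dW p.1 f * dW (i :: p.2) g).sum)
        + ((L.map fun p => dW (i :: p.1) f * dW p.2 g).sum) := by
  induction L with
  | nil =>
    refine ⟨contDiff_const, ?_⟩
    simp only [List.map_nil, List.sum_nil, add_zero]
    exact pd_const 0 i
  | cons p L ih =>
    have h1 := smooth_mul (dW_smooth hf p.1) (dW_smooth hg p.2)
    refine ⟨by simpa using smooth_add h1 ih.1, ?_⟩
    simp only [List.map_cons, List.sum_cons]
    rw [pd_add h1 ih.1, ih.2, pd_mul (dW_smooth hf p.1) (dW_smooth hg p.2)]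
    simp only [dW]
    abel

lemma dW_mul {f g : SF} (hf : SmoothS f) (hg : SmoothS g) (l : List (Fin 3)) :
    dW l (f * g) = ((splits l).map fun p => dW p.1 f * dW p.2 g).sum := by
  induction l with
  | nil => simp [splits, dW]
  | cons i l ih =>
    simp only [dW, ih, (pd_listsum (splits l) hf hg i).2, splits, List.map_append, List.map_map,
      List.sum_append]
    rfl

lemma listsum_apply (L : List (List (Fin 3) × List (Fin 3)))
    (F : List (Fin 3) × List (Fin 3) → SF) (x : Pt) :
    (L.map F).sum x = (L.map fun p => F p x).sum := by
  induction L with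
  | nil => rfl
  | cons p L ih => simp [ih]

lemma abs_listsum_le {β : Type*} (L : List β) (F : β → ℝ) (M : ℝ) (h : ∀ p ∈ L, |F p| ≤ M) :
    |(L.map F).sum| ≤ L.length * M := by
  induction L with
  | nil => simp
  | cons p L ih =>
    simp only [List.map_cons, List.sum_cons, List.length_cons]
    have h1 := h p (by simp)
    have h2 := ih fun q hq => h q (by simp [hq])
    have := abs_add_le (F p) ((L.map F).sum)
    push_cast
    linarith

/-- Pointwise Leibniz bound. -/
lemma dW_mul_le {f g : SF} (hf : SmoothS f) (hg : SmoothS g) (l : List (Fin 3)) (x : Pt) (M : ℝ)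
    (h : ∀ a b : List (Fin 3), a.length + b.length = l.length → |dW a f x| * |dW b g x| ≤ M) :
    |dW l (f * g) x| ≤ 2 ^ l.length * M := by
  rw [dW_mul hf hg, listsum_apply]
  have := abs_listsum_le (splits l) (fun p => (dW p.1 f * dW p.2 g) x) M (by
    intro p hp
    simp only [Pi.mul_apply, abs_mul]
    exact h _ _ (splits_sum p hp))
  rw [splits_length] at this
  exact_mod_cast this

/-- Recursive bound for derivatives of a reciprocal. -/
lemma dW_inv_le {g w : SF} (hg : SmoothS g) (hw : SmoothS w) (h1 : ∀ x, g x * w x = 1)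
    (l : List (Fin 3)) (hl : l ≠ []) (x : Pt) (M : ℝ) (hM : 0 ≤ M)
    (h : ∀ a b : List (Fin 3), a ≠ [] → a.length + b.length = l.length →
      |dW a g x| * |dW b w x| ≤ M) :
    |dW l w x| ≤ |w x| * (2 ^ l.length * M) := by
  have hgw : g * w = fun _ => (1 : ℝ) := funext h1
  have h0 : dW l (g * w) x = 0 := by rw [hgw, dW_one l hl]
  obtain ⟨r, hr, hr'⟩ := splits_rest l
  have hlen : r.length + 1 = 2 ^ l.length := by rw [← splits_length, hr]; rfl
  rw [dW_mul hg hw, listsum_apply] at h0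
  have hb := abs_listsum_le r (fun p => (dW p.1 g * dW p.2 w) x) M (by
    intro p hp
    simp only [Pi.mul_apply, abs_mul]
    exact h _ _ (hr' p hp) (splits_sum p (by rw [hr]; simp [hp])))
  rw [hr, List.map_cons, List.sum_cons] at h0
  set R := (r.map fun p => (dW p.1 g * dW p.2 w) x).sum with hR
  have h0' : g x * dW l w x = - R := by
    simp only [dW, Pi.mul_apply] at h0; linarith
  have h2 : dW l w x = - (w x * R) := by
    calc dW l w x = (g x * w x) * dW l w x := by rw [h1, one_mul]
      _ = w x * (g x * dW l w x) := by ring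
      _ = _ := by rw [h0']; ring
  rw [h2, abs_neg, abs_mul]
  gcongr
  refine hb.trans ?_
  gcongr
  have : (r.length : ℝ) + 1 = 2 ^ l.length := by exact_mod_cast hlen
  linarith

/-! ### Pointwise bounds -/

lemma inv_low {g w : SF} (hg : SmoothS g) (hw : SmoothS w) (h1 : ∀ x, g x * w x = 1)
    (c A : ℝ) (hc : 0 < c) (hA : 1 ≤ A) (n : ℕ) (x : Pt) (hwx : |w x| ≤ c)
    (hgA : ∀ a : List (Fin 3), a.length ≤ n → |dW a g x| ≤ A) (B : ℝ)
    (hB : B = (1 + c) * 2 ^ (n + 1) * A) :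
    ∀ k ≤ n, ∀ l : List (Fin 3), l.length = k → |dW l w x| ≤ c * B ^ k := by
  have hB1 : 1 ≤ B := by
    rw [hB]
    have : (1 : ℝ) ≤ 2 ^ (n + 1) := one_le_pow₀ (by norm_num)
    have h2 : 1 ≤ (1 + c) * 2 ^ (n + 1) := by nlinarith
    nlinarith
  intro k
  induction k using Nat.strong_induction_on with
  | _ k ih =>
    intro hk l hl
    rcases Nat.eq_zero_or_pos k with h0 | hpos
    · subst h0
      have : l = [] := List.length_eq_zero_iff.1 hl
      subst this
      simpa [dW] using hwx
    · obtain ⟨k', rfl⟩ : ∃ k', k = k' + 1 := ⟨k - 1, by omega⟩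
      have hl' : l ≠ [] := by rintro rfl; simp at hl
      have hmain := dW_inv_le hg hw h1 l hl' x (A * (c * B ^ k')) (by positivity) (by
        intro a b ha hab
        have ha' : 0 < a.length := List.length_pos_iff.2 ha
        have e1 := hgA a (by omega)
        have e2 := ih b.length (by omega) (by omega) b rfl
        have e3 : c * B ^ b.length ≤ c * B ^ k' := by
          gcongr
          omega
        exact mul_le_mul e1 (e2.trans e3) (abs_nonneg _) (by linarith))
      refine hmain.trans ?_
      rw [hl]
      have e4 : (2 : ℝ) ^ (k' + 1) ≤ 2 ^ (n + 1) := by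
        gcongr
        · norm_num
        · omega
      have e5 : c * (2 : ℝ) ^ (k' + 1) * A ≤ B := by
        rw [hB]; gcongr; linarith
      calc |w x| * (2 ^ (k' + 1) * (A * (c * B ^ k')))
          ≤ c * (2 ^ (k' + 1) * (A * (c * B ^ k'))) := by gcongr
        _ = c * ((c * 2 ^ (k' + 1) * A) * B ^ k') := by ring
        _ ≤ c * (B * B ^ k') := by gcongr
        _ = c * B ^ (k' + 1) := by ring

lemma inv_top {g w : SF} (hg : SmoothS g) (hw : SmoothS w) (h1 : ∀ x, g x * w x = 1)
    (c A : ℝ) (hc : 0 < c) (hA : 1 ≤ A) (n : ℕ) (x : Pt) (hwx : |w x| ≤ c)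
    (hgA : ∀ a : List (Fin 3), a.length ≤ n → |dW a g x| ≤ A) (B : ℝ)
    (hB : B = (1 + c) * 2 ^ (n + 1) * A) (G : ℝ) (hG0 : 0 ≤ G)
    (hG : ∀ a : List (Fin 3), a.length = n + 1 → |dW a g x| ≤ G)
    (l : List (Fin 3)) (hl : l.length = n + 1) :
    |dW l w x| ≤ c * (B ^ (n + 1) + 2 ^ (n + 1) * c * G) := by
  have hB1 : 1 ≤ B := by
    rw [hB]
    have : (1 : ℝ) ≤ 2 ^ (n + 1) := one_le_pow₀ (by norm_num)
    have h2 : 1 ≤ (1 + c) * 2 ^ (n + 1) := by nlinarith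
    nlinarith
  have hl' : l ≠ [] := by rintro rfl; simp at hl
  have hmain := dW_inv_le hg hw h1 l hl' x (A * (c * B ^ n) + G * c) (by positivity) (by
    intro a b ha hab
    have ha' : 0 < a.length := List.length_pos_iff.2 ha
    rcases Nat.lt_or_ge n a.length with h | h
    · have hb : b = [] := List.length_eq_zero_iff.1 (by omega)
      subst hb
      have e1 := hG a (by simp at hab; omega)
      have : |dW a g x| * |dW [] w x| ≤ G * c := mul_le_mul e1 hwx (abs_nonneg _) hG0
      have h3 : 0 ≤ A * (c * B ^ n) := by positivity
      linarith
    · have e2 := inv_low hg hw h1 c A hc hA n x hwx hgA B hB b.length (by omega) b rfl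
      have e3 : c * B ^ b.length ≤ c * B ^ n := by
        gcongr
        omega
      have := mul_le_mul (hgA a h) (e2.trans e3) (abs_nonneg _) (by linarith)
      have h3 : 0 ≤ G * c := by positivity
      linarith)
  refine hmain.trans ?_
  rw [hl]
  have e5 : c * (2 : ℝ) ^ (n + 1) * A ≤ B := by
    rw [hB]; gcongr; linarith
  calc |w x| * (2 ^ (n + 1) * (A * (c * B ^ n) + G * c))
      ≤ c * (2 ^ (n + 1) * (A * (c * B ^ n) + G * c)) := by gcongr
    _ = c * ((c * 2 ^ (n + 1) * A) * B ^ n + 2 ^ (n + 1) * c * G) := by ring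
    _ ≤ c * (B * B ^ n + 2 ^ (n + 1) * c * G) := by gcongr
    _ = _ := by ring

lemma point_bound {g w v : SF} (hg : SmoothS g) (hw : SmoothS w) (hv : SmoothS v)
    (h1 : ∀ x, g x * w x = 1)
    (c A : ℝ) (hc : 0 < c) (hA : 1 ≤ A) (n : ℕ) (hn : 2 ≤ n) (x : Pt) (hwx : |w x| ≤ c)
    (hgA : ∀ a : List (Fin 3), a.length ≤ n → |dW a g x| ≤ A) (B : ℝ)
    (hB : B = (1 + c) * 2 ^ (n + 1) * A) (G : ℝ) (hG0 : 0 ≤ G)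
    (hG : ∀ a : List (Fin 3), a.length = n + 1 → |dW a g x| ≤ G)
    (E H : ℝ) (hE : 0 ≤ E) (hH : 0 ≤ H)
    (hvE : ∀ a : List (Fin 3), a.length + 1 ≤ n → |dW a v x| ≤ E)
    (hvH : ∀ a : List (Fin 3), a.length ≤ n + 1 → |dW a v x| ≤ H)
    (l : List (Fin 3)) (hl : l.length ≤ n + 1) :
    |dW l (w * (v * v)) x| ≤ c * (2 ^ (n + 1) * 2 ^ (n + 1)) *
      (B ^ (n + 1) * E * H + B ^ (n + 1) * E ^ 2 + c * G * E ^ 2) := by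
  have hB1 : 1 ≤ B := by
    rw [hB]
    have : (1 : ℝ) ≤ 2 ^ (n + 1) := one_le_pow₀ (by norm_num)
    have h2 : 1 ≤ (1 + c) * 2 ^ (n + 1) := by nlinarith
    nlinarith
  have hP : ∀ k ≤ n + 1, (2 : ℝ) ^ k ≤ 2 ^ (n + 1) := by
    intro k hk
    gcongr
    norm_num
  have hP1 : (1 : ℝ) ≤ 2 ^ (n + 1) := one_le_pow₀ (by norm_num)
  have hvv : ∀ b : List (Fin 3), b.length ≤ n + 1 →
      |dW b (v * v) x| ≤ 2 ^ (n + 1) * (E * H) := by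
    intro b hb
    have := dW_mul_le hv hv b x (E * H) (by
      intro a a' h
      rcases Nat.lt_or_ge a.length n with h' | h'
      · exact mul_le_mul (hvE a h') (hvH a' (by omega)) (abs_nonneg _) hE
      · rw [mul_comm]
        exact mul_le_mul (hvE a' (by omega)) (hvH a (by omega)) (abs_nonneg _) hE)
    refine this.trans ?_
    have := hP _ hb
    gcongr
  have hvv0 : |dW [] (v * v) x| ≤ E ^ 2 := by
    have := hvE [] (by simp; omega)
    simp only [dW, Pi.mul_apply, abs_mul] at this ⊢
    nlinarith [abs_nonneg (v x)]
  have hmain := dW_mul_le hw (smooth_mul hv hv) l x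
    (c * 2 ^ (n + 1) * (B ^ (n + 1) * E * H + B ^ (n + 1) * E ^ 2 + c * G * E ^ 2)) (by
    intro a b hab
    rcases Nat.lt_or_ge n a.length with h | h
    · have hb : b = [] := List.length_eq_zero_iff.1 (by omega)
      subst hb
      have e1 := inv_top hg hw h1 c A hc hA n x hwx hgA B hB G hG0 hG a
        (by simp at hab; omega)
      have e2 := mul_le_mul e1 hvv0 (abs_nonneg _) (by positivity)
      refine e2.trans ?_
      calc c * (B ^ (n + 1) + 2 ^ (n + 1) * c * G) * E ^ 2
          = c * (1 * B ^ (n + 1) + 2 ^ (n + 1) * (c * G)) * E ^ 2 := by ring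
        _ ≤ c * (2 ^ (n + 1) * B ^ (n + 1) + 2 ^ (n + 1) * (c * G)) * E ^ 2 := by gcongr
        _ = c * 2 ^ (n + 1) * (0 + B ^ (n + 1) * E ^ 2 + c * G * E ^ 2) := by ring
        _ ≤ _ := by
          gcongr
          positivity
    · have e1 := inv_low hg hw h1 c A hc hA n x hwx hgA B hB a.length h a rfl
      have e3 : c * B ^ a.length ≤ c * B ^ (n + 1) := by
        gcongr
        omega
      have e2 := mul_le_mul (e1.trans e3) (hvv b (by omega)) (abs_nonneg _) (by positivity)
      refine e2.trans ?_
      calc c * B ^ (n + 1) * (2 ^ (n + 1) * (E * H))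
          = c * 2 ^ (n + 1) * (B ^ (n + 1) * E * H + 0 + 0) := by ring
        _ ≤ _ := by
          gcongr <;> positivity)
  refine hmain.trans ?_
  calc 2 ^ l.length * (c * 2 ^ (n + 1) *
        (B ^ (n + 1) * E * H + B ^ (n + 1) * E ^ 2 + c * G * E ^ 2))
      ≤ 2 ^ (n + 1) * (c * 2 ^ (n + 1) *
        (B ^ (n + 1) * E * H + B ^ (n + 1) * E ^ 2 + c * G * E ^ 2)) := by
        have := hP _ hl
        gcongr
    _ = _ := by ring

/-- Squared `L²` bound of one quadratic term. -/
lemma quad_bound {g w v : SF} (hg : SmoothS g) (hw : SmoothS w) (hv : SmoothS v)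
    (h1 : ∀ x, g x * w x = 1)
    (c A : ℝ) (hc : 0 < c) (hA : 1 ≤ A) (n : ℕ) (hn : 2 ≤ n) (hwx : ∀ x, |w x| ≤ c)
    (hgA : ∀ x ∈ Q3, ∀ a : List (Fin 3), a.length ≤ n → |dW a g x| ≤ A) (B : ℝ)
    (hB : B = (1 + c) * 2 ^ (n + 1) * A) (JG JH : Pt → ℝ) (hJG : Continuous JG) (hJH : Continuous JH)
    (hG : ∀ x, ∀ a : List (Fin 3), a.length = n + 1 → (dW a g x) ^ 2 ≤ JG x)
    (hGi : ∫ x in Q3, JG x ≤ A ^ 2)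
    (E : ℝ) (hE : 0 ≤ E)
    (hvE : ∀ x ∈ Q3, ∀ a : List (Fin 3), a.length + 1 ≤ n → |dW a v x| ≤ E)
    (hvH : ∀ x, ∀ a : List (Fin 3), a.length ≤ n + 1 → (dW a v x) ^ 2 ≤ JH x)
    (hHi : ∫ x in Q3, JH x ≤ E ^ 2)
    (l : List (Fin 3)) (hl : l.length ≤ n + 1) :
    ∫ x in Q3, (dW l (w * (v * v)) x) ^ 2 ≤
      3 * (c * (2 ^ (n + 1) * 2 ^ (n + 1))) ^ 2 * (1 + (volume Q3).toReal + c ^ 2) *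
        (B ^ (2 * (n + 1)) * E ^ 4) := by
  set P := c * (2 ^ (n + 1) * 2 ^ (n + 1)) with hP
  have hB1 : A ≤ B := by
    rw [hB]
    have : (1 : ℝ) ≤ 2 ^ (n + 1) := one_le_pow₀ (by norm_num)
    have h2 : 1 ≤ (1 + c) * 2 ^ (n + 1) := by nlinarith
    nlinarith
  have hpt : ∀ x ∈ Q3, (dW l (w * (v * v)) x) ^ 2 ≤
      3 * P ^ 2 * (B ^ (2 * (n + 1)) * E ^ 2 * JH x + B ^ (2 * (n + 1)) * E ^ 4
        + c ^ 2 * E ^ 4 * JG x) := by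
    intro x hx
    have hJGx : 0 ≤ JG x := (sq_nonneg _).trans (hG x (List.replicate (n + 1) 0) (by simp))
    have hJHx : 0 ≤ JH x := (sq_nonneg _).trans (hvH x [] (by simp))
    have hb := point_bound hg hw hv h1 c A hc hA n hn x (hwx x) (hgA x hx) B hB
      (Real.sqrt (JG x)) (Real.sqrt_nonneg _) (fun a ha => Real.abs_le_sqrt (hG x a ha))
      E (Real.sqrt (JH x)) hE (Real.sqrt_nonneg _) (hvE x hx)
      (fun a ha => Real.abs_le_sqrt (hvH x a ha)) l hl
    rw [← hP] at hb
    have hsq := pow_le_pow_left₀ (abs_nonneg _) hb 2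
    rw [sq_abs] at hsq
    refine hsq.trans ?_
    have e1 := Real.sq_sqrt hJGx
    have e2 := Real.sq_sqrt hJHx
    generalize Real.sqrt (JG x) = G at *
    generalize Real.sqrt (JH x) = H at *
    rw [← e1, ← e2]
    have h3 : ∀ p q r : ℝ, (p + q + r) ^ 2 ≤ 3 * (p ^ 2 + q ^ 2 + r ^ 2) := by
      intro p q r
      nlinarith [sq_nonneg (p - q), sq_nonneg (q - r), sq_nonneg (p - r)]
    calc (P * (B ^ (n + 1) * E * H + B ^ (n + 1) * E ^ 2 + c * G * E ^ 2)) ^ 2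
        = P ^ 2 * (B ^ (n + 1) * E * H + B ^ (n + 1) * E ^ 2 + c * G * E ^ 2) ^ 2 := by ring
      _ ≤ P ^ 2 * (3 * ((B ^ (n + 1) * E * H) ^ 2 + (B ^ (n + 1) * E ^ 2) ^ 2
            + (c * G * E ^ 2) ^ 2)) := by
          gcongr
          exact h3 _ _ _
      _ = _ := by ring
  have hlhs : IntegrableOn (fun x => (dW l (w * (v * v)) x) ^ 2) Q3 :=
    int_on ((dW_smooth (smooth_mul hw (smooth_mul hv hv)) l).continuous.pow 2)
  have hmono := setIntegral_mono_on hlhs (g := fun x =>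
      3 * P ^ 2 * (B ^ (2 * (n + 1)) * E ^ 2 * JH x + B ^ (2 * (n + 1)) * E ^ 4
        + c ^ 2 * E ^ 4 * JG x)) (int_on (by fun_prop)) Q3_meas hpt
  refine hmono.trans ?_
  have hcompute : ∫ x in Q3, 3 * P ^ 2 * (B ^ (2 * (n + 1)) * E ^ 2 * JH x
        + B ^ (2 * (n + 1)) * E ^ 4 + c ^ 2 * E ^ 4 * JG x)
      = 3 * P ^ 2 * (B ^ (2 * (n + 1)) * E ^ 2 * (∫ x in Q3, JH x)
        + (volume Q3).toReal * (B ^ (2 * (n + 1)) * E ^ 4) + c ^ 2 * E ^ 4 * ∫ x in Q3, JG x) := by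
    rw [integral_const_mul]
    congr 1
    rw [integral_add, integral_add, integral_const_mul, integral_const_mul (c ^ 2 * E ^ 4)]
    · simp [Measure.real]
    · exact int_on (by fun_prop)
    · exact int_on (by fun_prop)
    · exact int_on (by fun_prop)
    · exact int_on (by fun_prop)
  rw [hcompute]
  have hA2 : A ^ 2 ≤ B ^ (2 * (n + 1)) := by
    calc A ^ 2 ≤ B ^ 2 := by gcongr
      _ ≤ B ^ (2 * (n + 1)) := pow_le_pow_right₀ (by linarith) (by omega)
  have hV : 0 ≤ (volume Q3).toReal := ENNReal.toReal_nonneg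
  have hB0 : 0 ≤ B ^ (2 * (n + 1)) := pow_nonneg (by linarith) _
  calc 3 * P ^ 2 * (B ^ (2 * (n + 1)) * E ^ 2 * (∫ x in Q3, JH x)
        + (volume Q3).toReal * (B ^ (2 * (n + 1)) * E ^ 4) + c ^ 2 * E ^ 4 * ∫ x in Q3, JG x)
      ≤ 3 * P ^ 2 * (B ^ (2 * (n + 1)) * E ^ 2 * E ^ 2
        + (volume Q3).toReal * (B ^ (2 * (n + 1)) * E ^ 4)
        + c ^ 2 * E ^ 4 * B ^ (2 * (n + 1))) := by
        gcongr
        exact hGi.trans hA2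
    _ = _ := by ring

/-! ### Integration by parts -/

lemma int_pd_zero {h : SF} (hh : SmoothS h) (hp : PerS h) (i : Fin 3) :
    ∫ x in Q3, pd i h x = 0 := by
  have key := integral_divergence_of_hasFDerivAt_off_countable' (n := 2) (E := ℝ)
    (0 : Pt) (fun _ => 2 * π) (fun _ => by positivity)
    (fun j => if j = i then h else fun _ => 0)
    (fun j x => if j = i then fderiv ℝ h x else 0) ∅ Set.countable_empty
    (fun j => by
      by_cases hj : j = i
      · simp only [hj, if_true]; exact hh.continuous.continuousOn
      · simp only [hj, if_false]; exact continuousOn_const)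
    (fun x _ j => by
      by_cases hj : j = i
      · simp only [hj, if_true]; exact (smooth_diff hh x).hasFDerivAt
      · simp only [hj, if_false]; exact hasFDerivAt_const _ _)
    (by
      have : (fun x : Pt => ∑ j : Fin 3, (if j = i then fderiv ℝ h x else 0) (Pi.single j 1))
          = pd i h := by
        funext x
        rw [Finset.sum_eq_single i]
        · simp [pd]
        · intro j _ hj; simp [hj]
        · simp
      rw [this, ← Q3_eq]
      exact sm_int (pd_smooth hh i))
  have e : (fun x : Pt => ∑ j : Fin 3, (if j = i then fderiv ℝ h x else 0) (Pi.single j 1))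
      = pd i h := by
    funext x
    rw [Finset.sum_eq_single i]
    · simp [pd]
    · intro j _ hj; simp [hj]
    · simp
  rw [e, ← Q3_eq] at key
  rw [key]
  apply Finset.sum_eq_zero
  intro j _
  by_cases hj : j = i
  · subst hj
    simp only [if_true]
    rw [sub_eq_zero]
    congr 1
    funext y
    have hper := hp (j.insertNth (0 : ℝ) y) j
    have : (j.insertNth (0 : ℝ) y : Pt) + Pi.single j (2 * π) = j.insertNth (2 * π) y := by
      funext k
      by_cases hk : k = j
      · subst hk; simp
      · obtain ⟨k', rfl⟩ := Fin.exists_succAbove_eq hk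
        simp
    rw [this] at hper
    exact hper
  · simp [hj]

lemma pd_per {h : SF} (hp : PerS h) (i : Fin 3) : PerS (pd i h) := by
  intro x j
  have : h = fun y => h (y + Pi.single j (2 * π)) := funext fun y => (hp y j).symm
  unfold pd
  conv_rhs => rw [this]
  rw [fderiv_comp_add_right]

lemma dW_per {h : SF} (hp : PerS h) (l : List (Fin 3)) : PerS (dW l h) := by
  induction l with
  | nil => exact hp
  | cons i l ih => exact pd_per ih i

lemma ibp {f g : SF} (hf : SmoothS f) (hg : SmoothS g) (pf : PerS f) (pg : PerS g) (i : Fin 3) :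
    ip (pd i f) g = - ∫ x in Q3, f x * pd i g x := by
  have h0 := int_pd_zero (smooth_mul hf hg) (fun x j => by simp [pf x j, pg x j]) i
  rw [pd_mul hf hg] at h0
  simp only [Pi.add_apply, Pi.mul_apply] at h0
  rw [integral_add] at h0
  · unfold ip; linarith
  · exact sm_int (smooth_mul hf (pd_smooth hg i))
  · exact sm_int (smooth_mul (pd_smooth hf i) hg)

lemma ip_le {f g : SF} (hf : SmoothS f) (hg : SmoothS g) (pf : PerS f) (pg : PerS g) (i : Fin 3)
    (η : ℝ) (hη : 0 < η) :
    ip (pd i f) g ≤ η * (L2V (grad g)) ^ 2 + 1 / (4 * η) * ∫ x in Q3, f x ^ 2 := by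
  rw [ibp hf hg pf pg, L2V_sq, ← integral_neg, ← integral_const_mul, ← integral_const_mul,
    ← integral_add]
  · apply setIntegral_mono
    · exact (sm_int (smooth_mul hf (pd_smooth hg i))).neg
    · apply Integrable.add
      · exact int_on (continuous_const.mul (continuous_finsetSum _ fun j _ =>
          (pd_smooth hg j).continuous.pow 2))
      · exact int_on (continuous_const.mul (hf.continuous.pow 2))
    · intro x
      have h1 : pd i g x ^ 2 ≤ ∑ j, grad g j x ^ 2 :=
        Finset.single_le_sum (f := fun j => grad g j x ^ 2) (fun _ _ => sq_nonneg _)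
          (Finset.mem_univ i)
      have h2 : -(f x * pd i g x) ≤ η * pd i g x ^ 2 + 1 / (4 * η) * f x ^ 2 := by
        have : η * pd i g x ^ 2 + 1 / (4 * η) * f x ^ 2 + f x * pd i g x
            = 1 / (4 * η) * (2 * η * pd i g x + f x) ^ 2 := by
          field_simp; ring
        have h3 : 0 ≤ 1 / (4 * η) * (2 * η * pd i g x + f x) ^ 2 := by positivity
        linarith
      have h4 := mul_le_mul_of_nonneg_left h1 hη.le
      simp only
      linarith
  · exact int_on (continuous_const.mul (continuous_finsetSum _ fun j _ =>
      (pd_smooth hg j).continuous.pow 2))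
  · exact int_on (continuous_const.mul (hf.continuous.pow 2))

/-! ### Sobolev embedding -/

lemma fderiv_eq_sum (f : SF) (y e : Pt) : fderiv ℝ f y e = ∑ i, e i * pd i f y := by
  have : e = ∑ i, e i • (Pi.single i 1 : Pt) := by
    funext k; simp [Pi.single_apply]
  conv_lhs => rw [this]
  simp [pd, map_sum]

lemma path_deriv {f : SF} (hf : SmoothS f) (x e : Pt) (τ : ℝ) :
    HasDerivAt (fun τ : ℝ => f (x + τ ^ 2 • e)) (2 * τ * ∑ i, e i * pd i f (x + τ ^ 2 • e)) τ := by
  have hp : HasDerivAt (fun τ : ℝ => x + τ ^ 2 • e) ((2 * τ) • e) τ := by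
    have h := ((hasDerivAt_pow 2 τ).smul_const e).const_add x
    simpa using h
  have h2 := (smooth_diff hf (x + τ ^ 2 • e)).hasFDerivAt.comp_hasDerivAt τ hp
  rw [map_smul, fderiv_eq_sum] at h2
  exact h2

/-- Sum of squares of second derivatives. -/
noncomputable def TT (f : SF) : Pt → ℝ := fun y => ∑ i, ∑ j, (pd j (pd i f) y) ^ 2

lemma TT_cont {f : SF} (hf : SmoothS f) : Continuous (TT f) :=
  continuous_finsetSum _ fun i _ => continuous_finsetSum _ fun j _ =>
    (pd_smooth (pd_smooth hf i) j).continuous.pow 2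

lemma TT_nonneg (f : SF) (y : Pt) : 0 ≤ TT f y :=
  Finset.sum_nonneg fun _ _ => Finset.sum_nonneg fun _ _ => sq_nonneg _

lemma unit_jensen {F : ℝ → ℝ} (hF : Continuous F) :
    (∫ τ in (0:ℝ)..1, F τ) ^ 2 ≤ ∫ τ in (0:ℝ)..1, F τ ^ 2 := by
  set c := ∫ τ in (0:ℝ)..1, F τ with hc
  have h0 : 0 ≤ ∫ τ in (0:ℝ)..1, (F τ - c) ^ 2 :=
    intervalIntegral.integral_nonneg (by norm_num) fun _ _ => sq_nonneg _
  have h1 : ∫ τ in (0:ℝ)..1, (F τ - c) ^ 2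
      = (∫ τ in (0:ℝ)..1, F τ ^ 2) - 2 * c * (∫ τ in (0:ℝ)..1, F τ) + c ^ 2 := by
    have : ∀ τ, (F τ - c) ^ 2 = F τ ^ 2 - 2 * c * F τ + c ^ 2 := fun τ => by ring
    simp only [this]
    rw [intervalIntegral.integral_add, intervalIntegral.integral_sub,
      intervalIntegral.integral_const_mul]
    · simp
    all_goals exact Continuous.intervalIntegrable (by fun_prop) _ _
  rw [h1, ← hc] at h0
  nlinarith

lemma sum_sq_le3 (a e : Fin 3 → ℝ) (M : ℝ) (he : ∀ i, e i ^ 2 ≤ M) :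
    (∑ i, e i * a i) ^ 2 ≤ 3 * M * ∑ i, a i ^ 2 := by
  have h1 : (∑ i, e i * a i) ^ 2 ≤ 3 * ∑ i, (e i * a i) ^ 2 := by
    have := sq_sum_le_card_mul_sum_sq (s := (Finset.univ : Finset (Fin 3)))
      (f := fun i => e i * a i)
    simpa using this
  refine h1.trans ?_
  rw [mul_assoc]
  refine mul_le_mul_of_nonneg_left ?_ (by norm_num)
  rw [Finset.mul_sum]
  refine Finset.sum_le_sum fun i _ => ?_
  rw [mul_pow]
  exact mul_le_mul_of_nonneg_right (he i) (sq_nonneg _)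

lemma sob_point {f : SF} (hf : SmoothS f) (x z : Pt) (hx : x ∈ Q3) (hz : z ∈ Q3) :
    f x ^ 2 ≤ 3 * f z ^ 2 + 9 * (2 * π) ^ 2 * (∑ i, pd i f z ^ 2)
      + 108 * (2 * π) ^ 4 * ∫ τ in (0:ℝ)..1, τ ^ 6 * TT f (x + τ ^ 2 • (z - x)) := by
  set e := z - x with he
  have hei : ∀ i, e i ^ 2 ≤ (2 * π) ^ 2 := by
    intro i
    have h1 := hx i (Set.mem_univ i)
    have h2 := hz i (Set.mem_univ i)
    simp only [Set.mem_Icc] at h1 h2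
    apply sq_le_sq'
    · simp only [he, Pi.sub_apply]; linarith
    · simp only [he, Pi.sub_apply]; linarith
  set S : ℝ → ℝ := fun τ => ∑ i, e i * ∑ j, e j * pd j (pd i f) (x + τ ^ 2 • e) with hS
  have hcp : Continuous fun τ : ℝ => x + τ ^ 2 • e := by fun_prop
  have hScont : Continuous S := by
    refine continuous_finsetSum _ fun i _ => continuous_const.mul ?_
    refine continuous_finsetSum _ fun j _ => continuous_const.mul ?_
    exact (pd_smooth (pd_smooth hf i) j).continuous.comp hcp
  have hder : ∀ τ : ℝ, HasDerivAt
      (fun τ : ℝ => τ ^ 2 * (∑ i, e i * pd i f (x + τ ^ 2 • e)) - f (x + τ ^ 2 • e))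
      (2 * τ ^ 3 * S τ) τ := by
    intro τ
    have h1 : HasDerivAt (fun τ : ℝ => ∑ i, e i * pd i f (x + τ ^ 2 • e))
        (∑ i, e i * (2 * τ * ∑ j, e j * pd j (pd i f) (x + τ ^ 2 • e))) τ :=
      HasDerivAt.fun_sum fun i _ => (path_deriv (pd_smooth hf i) x e τ).const_mul (e i)
    have h2 := ((hasDerivAt_pow 2 τ).mul h1).sub (path_deriv hf x e τ)
    have h3 : ∑ i, e i * (2 * τ * ∑ j, e j * pd j (pd i f) (x + τ ^ 2 • e)) = 2 * τ * S τ := by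
      rw [hS, Finset.mul_sum]
      exact Finset.sum_congr rfl fun i _ => by ring
    exact h2.congr_deriv (by rw [h3]; push_cast; ring)
  have hftc := intervalIntegral.integral_eq_sub_of_hasDerivAt (a := 0) (b := 1)
    (fun τ _ => hder τ) (Continuous.intervalIntegrable (by fun_prop) _ _)
  have hxe : x + e = z := by rw [he]; abel
  simp only [one_pow, one_smul, one_mul, hxe, ne_eq, OfNat.ofNat_ne_zero, not_false_eq_true,
    zero_pow, zero_smul, add_zero, zero_mul, zero_sub] at hftc
  have hJ := unit_jensen (F := fun τ => 2 * τ ^ 3 * S τ) (by fun_prop)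
  have hS2 : ∀ τ, S τ ^ 2 ≤ 9 * (2 * π) ^ 4 * TT f (x + τ ^ 2 • e) := by
    intro τ
    have h1 := sum_sq_le3 (fun i => ∑ j, e j * pd j (pd i f) (x + τ ^ 2 • e)) e _ hei
    have h2 : ∑ i, (∑ j, e j * pd j (pd i f) (x + τ ^ 2 • e)) ^ 2
        ≤ ∑ i, 3 * (2 * π) ^ 2 * ∑ j, pd j (pd i f) (x + τ ^ 2 • e) ^ 2 :=
      Finset.sum_le_sum fun i _ => sum_sq_le3 _ e _ hei
    rw [← Finset.mul_sum] at h2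
    calc S τ ^ 2 ≤ _ := h1
      _ ≤ 3 * (2 * π) ^ 2 * (3 * (2 * π) ^ 2 * TT f (x + τ ^ 2 • e)) := by
          gcongr
          exact h2
      _ = _ := by ring
  have hTc : Continuous fun τ : ℝ => TT f (x + τ ^ 2 • e) := (TT_cont hf).comp hcp
  have hI : ∫ τ in (0:ℝ)..1, (2 * τ ^ 3 * S τ) ^ 2
      ≤ 36 * (2 * π) ^ 4 * ∫ τ in (0:ℝ)..1, τ ^ 6 * TT f (x + τ ^ 2 • e) := by
    rw [← intervalIntegral.integral_const_mul]
    apply intervalIntegral.integral_mono_on (by norm_num)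
    · exact Continuous.intervalIntegrable (by fun_prop) _ _
    · exact Continuous.intervalIntegrable (by fun_prop) _ _
    · intro τ _
      calc (2 * τ ^ 3 * S τ) ^ 2 = 4 * τ ^ 6 * S τ ^ 2 := by ring
        _ ≤ 4 * τ ^ 6 * (9 * (2 * π) ^ 4 * TT f (x + τ ^ 2 • e)) := by
            have : 0 ≤ τ ^ 6 := by positivity
            gcongr
            exact hS2 τ
        _ = _ := by ring
  have hR := sum_sq_le3 (fun i => pd i f z) e _ hei
  set I := ∫ τ in (0:ℝ)..1, 2 * τ ^ 3 * S τ with hIdef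
  set R := ∑ i, e i * pd i f z with hRdef
  have hfx : f x = f z - R + I := by linarith
  have h3 : f x ^ 2 ≤ 3 * (f z ^ 2 + R ^ 2 + I ^ 2) := by
    rw [hfx]
    nlinarith [sq_nonneg (f z + R), sq_nonneg (f z - I), sq_nonneg (R + I)]
  nlinarith [hJ.trans hI]

lemma scale_int {T : Pt → ℝ} (hT : Continuous T) (hT0 : ∀ y, 0 ≤ T y) (x : Pt) (hx : x ∈ Q3)
    (t : ℝ) (ht : 0 < t) (ht1 : t ≤ 1) :
    t ^ 3 * ∫ z in Q3, T (x + t • (z - x)) ≤ ∫ z in Q3, T z := by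
  set h : Pt → ℝ := Q3.indicator T with hh
  have hint : Integrable h := (integrable_indicator_iff Q3_meas).2 (int_on hT)
  have hint2 : Integrable fun z : Pt => h (x + t • (z - x)) :=
    ((hint.comp_add_left x).comp_smul ht.ne').comp_sub_right x
  have hval : ∫ z : Pt, h (x + t • (z - x)) = (t ^ 3)⁻¹ * ∫ z, h z := by
    rw [integral_sub_right_eq_self (fun z => h (x + t • z)) x,
      Measure.integral_comp_smul_of_nonneg volume (fun z => h (x + z)) t (hR := ht.le),
      integral_add_left_eq_self h x]
    simp
  have h1 : ∫ z in Q3, T (x + t • (z - x)) ≤ ∫ z : Pt, h (x + t • (z - x)) := by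
    rw [← integral_indicator Q3_meas]
    apply integral_mono
    · rw [integrable_indicator_iff Q3_meas]
      exact int_on (by fun_prop)
    · exact hint2
    · intro z
      by_cases hz : z ∈ Q3
      · have hmem : x + t • (z - x) ∈ Q3 := Q3_convex.add_smul_sub_mem hx hz ⟨ht.le, ht1⟩
        simp [hh, Set.indicator_of_mem hz, Set.indicator_of_mem hmem]
      · simp only [Set.indicator_of_notMem hz]
        exact Set.indicator_nonneg (fun y _ => hT0 y) _
  have h2 : ∫ z, h z = ∫ z in Q3, T z := integral_indicator Q3_meas
  rw [hval, h2] at h1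
  have ht3 : 0 < t ^ 3 := by positivity
  calc t ^ 3 * ∫ z in Q3, T (x + t • (z - x)) ≤ t ^ 3 * ((t ^ 3)⁻¹ * ∫ z in Q3, T z) := by gcongr
    _ = _ := by field_simp

lemma Q3_vol : 0 < (volume Q3).toReal := by
  rw [Q3_eq, Real.volume_Icc_pi]
  have := pi_pos
  simp [ENNReal.toReal_ofReal pi_pos.le]
  positivity

lemma double_int {T : Pt → ℝ} (hT : Continuous T) (hT0 : ∀ y, 0 ≤ T y) (x : Pt) (hx : x ∈ Q3) :
    IntegrableOn (fun z => ∫ τ in (0:ℝ)..1, τ ^ 6 * T (x + τ ^ 2 • (z - x))) Q3 ∧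
    ∫ z in Q3, (∫ τ in (0:ℝ)..1, τ ^ 6 * T (x + τ ^ 2 • (z - x))) ≤ ∫ z in Q3, T z := by
  have hcont : Continuous (Function.uncurry fun (z : Pt) (τ : ℝ) =>
      τ ^ 6 * T (x + τ ^ 2 • (z - x))) := by
    unfold Function.uncurry
    fun_prop
  have hprod : Integrable (Function.uncurry fun (z : Pt) (τ : ℝ) =>
      τ ^ 6 * T (x + τ ^ 2 • (z - x)))
      ((volume.restrict Q3).prod (volume.restrict (Set.Ioc (0:ℝ) 1))) := by
    rw [Measure.prod_restrict]
    exact (hcont.continuousOn.integrableOn_compact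
      (Q3_compact.prod isCompact_Icc)).mono_set
        (Set.prod_mono le_rfl Set.Ioc_subset_Icc_self)
  simp only [intervalIntegral.integral_of_le (zero_le_one' ℝ)]
  refine ⟨hprod.integral_prod_left, ?_⟩
  rw [integral_integral_swap hprod]
  have hb : ∀ τ ∈ Set.Ioc (0:ℝ) 1, ∫ z in Q3, τ ^ 6 * T (x + τ ^ 2 • (z - x))
      ≤ ∫ z in Q3, T z := by
    intro τ hτ
    have := scale_int hT hT0 x hx (τ ^ 2) (pow_pos hτ.1 2) (pow_le_one₀ hτ.1.le hτ.2)
    rw [integral_const_mul]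
    calc _ = (τ ^ 2) ^ 3 * ∫ z in Q3, T (x + τ ^ 2 • (z - x)) := by ring
      _ ≤ _ := this
  calc ∫ τ in Set.Ioc (0:ℝ) 1, ∫ z in Q3, τ ^ 6 * T (x + τ ^ 2 • (z - x))
      ≤ ∫ τ in Set.Ioc (0:ℝ) 1, ∫ z in Q3, T z :=
        setIntegral_mono_on hprod.integral_prod_right (integrableOn_const (by simp))
          measurableSet_Ioc hb
    _ = _ := by simp

lemma sobolev : ∃ C > (0:ℝ), ∀ f : SF, SmoothS f → ∀ S : ℝ,
    (∀ l : List (Fin 3), l.length ≤ 2 → ∫ x in Q3, (dW l f x) ^ 2 ≤ S) →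
    ∀ x ∈ Q3, f x ^ 2 ≤ C * S := by
  refine ⟨(3 + 27 * (2 * π) ^ 2 + 972 * (2 * π) ^ 4) / (volume Q3).toReal,
    div_pos (by positivity) Q3_vol, ?_⟩
  intro f hf S hS x hx
  have hT := double_int (TT_cont hf) (TT_nonneg f) x hx
  have h1 : ∫ z in Q3, f x ^ 2 ≤ ∫ z in Q3, (3 * f z ^ 2 + 9 * (2 * π) ^ 2 * (∑ i, pd i f z ^ 2)
      + 108 * (2 * π) ^ 4 * ∫ τ in (0:ℝ)..1, τ ^ 6 * TT f (x + τ ^ 2 • (z - x))) := by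
    apply setIntegral_mono_on
    · exact int_on continuous_const
    · refine ((int_on ?_).add (int_on ?_)).add (hT.1.const_mul _)
      · exact continuous_const.mul (hf.continuous.pow 2)
      · exact continuous_const.mul (continuous_finsetSum _ fun i _ =>
          (pd_smooth hf i).continuous.pow 2)
    · exact Q3_meas
    · exact fun z hz => sob_point hf x z hx hz
  have i1 : IntegrableOn (fun z => 3 * f z ^ 2) Q3 :=
    int_on (continuous_const.mul (hf.continuous.pow 2))
  have i2 : IntegrableOn (fun z => 9 * (2 * π) ^ 2 * (∑ i, pd i f z ^ 2)) Q3 :=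
    int_on (continuous_const.mul (continuous_finsetSum _ fun i _ =>
          (pd_smooth hf i).continuous.pow 2))
  have i12 : IntegrableOn (fun z => 3 * f z ^ 2 + 9 * (2 * π) ^ 2 * (∑ i, pd i f z ^ 2)) Q3 :=
    i1.add i2
  rw [integral_add i12 (hT.1.const_mul _), integral_add i1 i2, integral_const_mul,
    integral_const_mul, integral_const_mul, integral_finsetSum (f := fun i z => pd i f z ^ 2) _ (fun i _ =>
      int_on ((pd_smooth hf i).continuous.pow 2))] at h1
  have b0 : ∫ z in Q3, f z ^ 2 ≤ S := hS [] (by simp)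
  have b1 : ∑ i, ∫ z in Q3, pd i f z ^ 2 ≤ 3 * S := by
    calc ∑ i, ∫ z in Q3, pd i f z ^ 2 ≤ ∑ i : Fin 3, S :=
          Finset.sum_le_sum fun i _ => hS [i] (by simp)
      _ = _ := by simp
  have b2 : ∫ z in Q3, TT f z ≤ 9 * S := by
    unfold TT
    rw [integral_finsetSum (f := fun i z => ∑ j, pd j (pd i f) z ^ 2) _ (fun i _ => int_on (continuous_finsetSum _ fun j _ =>
      (pd_smooth (pd_smooth hf i) j).continuous.pow 2))]
    calc ∑ i, ∫ z in Q3, ∑ j, pd j (pd i f) z ^ 2 ≤ ∑ i : Fin 3, 3 * S := by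
          apply Finset.sum_le_sum
          intro i _
          rw [integral_finsetSum (f := fun j z => pd j (pd i f) z ^ 2) _ (fun j _ => int_on
            ((pd_smooth (pd_smooth hf i) j).continuous.pow 2))]
          calc ∑ j, ∫ z in Q3, pd j (pd i f) z ^ 2 ≤ ∑ j : Fin 3, S :=
                Finset.sum_le_sum fun j _ => hS [j, i] (by simp)
            _ = _ := by simp
      _ = _ := by simp; ring
  have hc : ∫ z in Q3, f x ^ 2 = (volume Q3).toReal * f x ^ 2 := by simp [Measure.real]
  rw [hc] at h1
  rw [div_mul_eq_mul_div, le_div_iff₀ Q3_vol]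
  have p2 : 0 < (2 * π) ^ 2 := by positivity
  have p4 : 0 < (2 * π) ^ 4 := by positivity
  have c1 := mul_le_mul_of_nonneg_left b1 (by positivity : 0 ≤ 9 * (2 * π) ^ 2)
  have c2 := mul_le_mul_of_nonneg_left (hT.2.trans b2) (by positivity : 0 ≤ 108 * (2 * π) ^ 4)
  nlinarith

/-! ### The dissipation term -/

lemma sobolev_dW : ∃ κ : ℝ, 1 ≤ κ ∧ ∀ (s : ℕ) (f : SF), SmoothS f → ∀ l : List (Fin 3),
    l.length + 2 ≤ s → ∀ x ∈ Q3, |dW l f x| ≤ κ * HsNorm s f := by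
  obtain ⟨C, hC, h⟩ := sobolev
  refine ⟨C + 1, by linarith, ?_⟩
  intro s f hf l hl x hx
  have h1 := h (dW l f) (dW_smooth hf l) (HsNorm s f ^ 2) (fun l' hl' => by
    rw [← dW_append]
    exact dW_int_le hf _ (by simp; omega)) x hx
  have h0 := Hs_nonneg s f
  apply abs_le_of_sq_le_sq _ (by positivity)
  rw [mul_pow]
  refine h1.trans ?_
  gcongr
  nlinarith

/-- The quadratic building blocks of the dissipation. -/
noncomputable def vv (U : VF) : Option (Fin 3 × Fin 3) → SF
  | none => divv U
  | some p => Dsym U p.1 p.2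

/-- The coefficients of the building blocks. -/
noncomputable def vc (μ lam : ℝ) : Option (Fin 3 × Fin 3) → ℝ
  | none => lam
  | some _ => 2 * μ

lemma divv_eq (U : VF) : divv U = ∑ i, pd i (U i) := by
  funext x; simp [divv]

lemma Dsym_eq (U : VF) (i j : Fin 3) :
    Dsym U i j = (1 / 2 : ℝ) • (pd j (U i) + pd i (U j)) := by
  funext x; simp [Dsym]; ring

lemma vv_smooth {U : VF} (hU : SmoothV U) (o : Option (Fin 3 × Fin 3)) : SmoothS (vv U o) := by
  cases o with
  | none => simp only [vv, divv_eq]; exact smooth_sum _ _ fun i _ => pd_smooth (hU i) i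
  | some p =>
    simp only [vv, Dsym_eq]
    exact smooth_smul (smooth_add (pd_smooth (hU _) _) (pd_smooth (hU _) _)) _

lemma dW_pd (l : List (Fin 3)) (j : Fin 3) (f : SF) : dW l (pd j f) = dW (l ++ [j]) f := by
  rw [dW_append]; rfl

lemma dW_vv_none {U : VF} (hU : SmoothV U) (l : List (Fin 3)) (x : Pt) :
    dW l (vv U none) x = ∑ i, dW (l ++ [i]) (U i) x := by
  simp only [vv, divv_eq]
  rw [dW_sum _ _ (fun i => pd_smooth (hU i) i)]
  simp [dW_pd]

lemma dW_vv_some {U : VF} (hU : SmoothV U) (l : List (Fin 3)) (p : Fin 3 × Fin 3) (x : Pt) :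
    dW l (vv U (some p)) x
      = 1 / 2 * (dW (l ++ [p.2]) (U p.1) x + dW (l ++ [p.1]) (U p.2) x) := by
  simp only [vv, Dsym_eq]
  rw [dW_smul (smooth_add (pd_smooth (hU _) _) (pd_smooth (hU _) _)),
    dW_add (pd_smooth (hU _) _) (pd_smooth (hU _) _)]
  simp [dW_pd]

lemma vv_abs_le {U : VF} (hU : SmoothV U) (l : List (Fin 3)) (x : Pt) (M : ℝ) (hM : 0 ≤ M)
    (h : ∀ i j, |dW (l ++ [j]) (U i) x| ≤ M) (o : Option (Fin 3 × Fin 3)) :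
    |dW l (vv U o) x| ≤ 3 * M := by
  cases o with
  | none =>
    rw [dW_vv_none hU]
    refine (Finset.abs_sum_le_sum_abs _ _).trans ?_
    calc ∑ i, |dW (l ++ [i]) (U i) x| ≤ ∑ i : Fin 3, M := Finset.sum_le_sum fun i _ => h i i
      _ = _ := by simp
  | some p =>
    rw [dW_vv_some hU, abs_le]
    have h1 := abs_le.1 (h p.1 p.2)
    have h2 := abs_le.1 (h p.2 p.1)
    constructor <;> linarith

lemma vv_sq_le {U : VF} (hU : SmoothV U) (s : ℕ) (l : List (Fin 3)) (hl : l.length + 1 ≤ s)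
    (x : Pt) (o : Option (Fin 3 × Fin 3)) :
    (dW l (vv U o) x) ^ 2 ≤ 3 * ∑ i, JJ s (U i) x := by
  have h : ∀ i j, (dW (l ++ [j]) (U i) x) ^ 2 ≤ JJ s (U i) x := fun i j =>
    dW_sq_le_JJ (hU i) _ (by simpa using hl) x
  cases o with
  | none =>
    rw [dW_vv_none hU]
    have h1 := sq_sum_le_card_mul_sum_sq (s := (Finset.univ : Finset (Fin 3)))
      (f := fun i => dW (l ++ [i]) (U i) x)
    simp only [Finset.card_univ, Fintype.card_fin] at h1
    refine h1.trans ?_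
    push_cast
    exact mul_le_mul_of_nonneg_left (Finset.sum_le_sum fun i _ => h i i) (by norm_num)
  | some p =>
    rw [dW_vv_some hU]
    have h1 := h p.1 p.2
    have h2 := h p.2 p.1
    have h3 : ∀ k, JJ s (U k) x ≤ ∑ i, JJ s (U i) x := fun k =>
      Finset.single_le_sum (f := fun i => JJ s (U i) x) (fun i _ => JJ_nonneg _ _ _)
        (Finset.mem_univ k)
    have h4 := h3 p.1
    have h5 := h3 p.2
    have h6 := JJ_nonneg s (U p.1) x
    nlinarith [sq_nonneg (dW (l ++ [p.2]) (U p.1) x - dW (l ++ [p.1]) (U p.2) x)]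

lemma heat_eq (μ lam : ℝ) (g w : SF) (hw : ∀ y, w y = 1 / g y) (U : VF) :
    (fun y => 1 / g y * (2 * μ * DabsSq U y + lam * (divv U y) ^ 2))
      = ∑ o, vc μ lam o • (w * (vv U o * vv U o)) := by
  funext y
  rw [Fintype.sum_option, Fintype.sum_prod_type]
  simp only [vc, vv, Pi.add_apply, Finset.sum_apply, Pi.smul_apply, Pi.mul_apply, smul_eq_mul,
    DabsSq, hw, Finset.mul_sum, mul_add]
  rw [add_comm]
  congr 1
  · ring
  · refine Finset.sum_congr rfl fun i _ => Finset.sum_congr rfl fun j _ => ?_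
    ring

set_option maxHeartbeats 2000000 in
lemma heat_bound (n : ℕ) (hn : 2 ≤ n) (μ lam : ℝ) (hμ : 0 < μ) (K ρhat : ℝ) (hρ : 0 < ρhat) :
    ∃ C > (0:ℝ), ∀ ρ0 : SF, SmoothS ρ0 → HsNorm (n + 3) ρ0 ≤ K →
      ∀ (N : SF) (U : VF), SmoothS N → SmoothV U → (∀ x, ρhat / 2 ≤ N x + ρ0 x) →
      SmoothS (fun y => 1 / (N y + ρ0 y) * (2 * μ * DabsSq U y + lam * (divv U y) ^ 2)) ∧
      ∀ l : List (Fin 3), l.length ≤ n + 1 →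
        ∫ x in Q3, (dW l (fun y =>
          1 / (N y + ρ0 y) * (2 * μ * DabsSq U y + lam * (divv U y) ^ 2)) x) ^ 2
        ≤ C * ((HsNorm (n + 2) N + HsNormV (n + 2) U) ^ 4
          + (HsNorm (n + 2) N + HsNormV (n + 2) U) ^ (2 * (n + 3))) := by
  obtain ⟨κ, hκ, hsob⟩ := sobolev_dW
  set c : ℝ := 2 / ρhat with hc
  have hc0 : 0 < c := by positivity
  set P : ℝ := 3 * (c * (2 ^ (n + 1) * 2 ^ (n + 1))) ^ 2 * (1 + (volume Q3).toReal + c ^ 2) with hP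
  have hV := Q3_vol
  have hP0 : 0 < P := by positivity
  set q : ℝ := (1 + c) * 2 ^ (n + 1) with hq
  have hq0 : 0 < q := by positivity
  set a : ℝ := 1 + 2 * κ * |K| + 2 * κ with ha
  have ha0 : 0 < a := by positivity
  set M : ℝ := (2 * μ) ^ 2 + lam ^ 2 with hM
  have hM0 : 0 < M := by positivity
  refine ⟨100 * M * P * (q * a) ^ (2 * (n + 1)) * 2 ^ (2 * (n + 1) - 1) * (3 * κ) ^ 4,
    by positivity, ?_⟩
  intro ρ0 hρ0 hK N U hN hU hlow
  set g : SF := N + ρ0 with hg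
  have hgs : SmoothS g := smooth_add hN hρ0
  have hgpos : ∀ x, ρhat / 2 ≤ g x := hlow
  set w : SF := fun y => 1 / g y with hw
  have hgne : ∀ x, g x ≠ 0 := fun x => ((by positivity : 0 < ρhat / 2).trans_le (hgpos x)).ne'
  have hws : SmoothS w := ContDiff.div contDiff_const hgs hgne
  have hgw : ∀ x, g x * w x = 1 := fun x => by
    simp only [hw]; field_simp [hgne x]
  have hwc : ∀ x, |w x| ≤ c := by
    intro x
    have h1 := hgpos x
    have h2 : 0 < g x := by linarith
    simp only [hw]
    rw [abs_of_nonneg (by positivity), hc, div_le_div_iff₀ h2 hρ]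
    linarith
  have hF : (fun y => 1 / (N y + ρ0 y) * (2 * μ * DabsSq U y + lam * (divv U y) ^ 2))
      = ∑ o, vc μ lam o • (w * (vv U o * vv U o)) :=
    heat_eq μ lam g w (fun _ => rfl) U
  have hterm : ∀ o, SmoothS (w * (vv U o * vv U o)) := fun o =>
    smooth_mul hws (smooth_mul (vv_smooth hU o) (vv_smooth hU o))
  have htermc : ∀ o, SmoothS (vc μ lam o • (w * (vv U o * vv U o))) := fun o =>
    smooth_smul (hterm o) _
  rw [hF]
  refine ⟨smooth_sum _ _ fun o _ => htermc o, ?_⟩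
  intro l hl
  set E0 : ℝ := HsNorm (n + 2) N + HsNormV (n + 2) U with hE0
  have hN0 := Hs_nonneg (n + 2) N
  have hU0 := HsV_nonneg (n + 2) U
  have hρ00 := Hs_nonneg (n + 3) ρ0
  have hE00 : 0 ≤ E0 := by positivity
  have hKa : HsNorm (n + 3) ρ0 ≤ |K| := hK.trans (le_abs_self K)
  set A : ℝ := 1 + 2 * κ * (E0 + |K|) with hA
  have hA1 : 1 ≤ A := by
    have : 0 ≤ 2 * κ * (E0 + |K|) := by positivity
    linarith
  have hUi : ∀ i, HsNorm (n + 2) (U i) ≤ E0 := by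
    intro i
    have h1 : HsNorm (n + 2) (U i) ^ 2 ≤ HsNormV (n + 2) U ^ 2 := by
      rw [HsV_sq]
      exact Finset.single_le_sum (f := fun i => HsNorm (n + 2) (U i) ^ 2)
        (fun _ _ => sq_nonneg _) (Finset.mem_univ i)
    have h2 := (le_abs_self _).trans (abs_le_of_sq_le_sq h1 hU0)
    linarith
  have hgA : ∀ x ∈ Q3, ∀ b : List (Fin 3), b.length ≤ n → |dW b g x| ≤ A := by
    intro x hx b hb
    rw [hg, dW_add hN hρ0]
    have h1 := hsob (n + 2) N hN b (by omega) x hx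
    have h2 := hsob (n + 3) ρ0 hρ0 b (by omega) x hx
    have h3 := abs_add_le (dW b N x) (dW b ρ0 x)
    have h4 : κ * HsNorm (n + 2) N ≤ κ * E0 := by gcongr; linarith
    have h5 : κ * HsNorm (n + 3) ρ0 ≤ κ * |K| := by gcongr
    have h6 : 0 ≤ κ * (E0 + |K|) := by positivity
    simp only [Pi.add_apply]
    rw [hA]
    linarith
  have hJGi : ∫ x in Q3, (2 * JJ (n + 2) N x + 2 * JJ (n + 3) ρ0 x) ≤ A ^ 2 := by
    rw [integral_add ((int_on (JJ_cont _ hN)).const_mul 2)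
      ((int_on (JJ_cont _ hρ0)).const_mul 2), integral_const_mul, integral_const_mul,
      JJ_int _ hN, JJ_int _ hρ0]
    have h1 : HsNorm (n + 2) N ^ 2 ≤ E0 ^ 2 := by gcongr; linarith
    have h2 : HsNorm (n + 3) ρ0 ^ 2 ≤ |K| ^ 2 := by gcongr
    have h3 : (2 * (E0 + |K|)) ^ 2 ≤ A ^ 2 := by
      gcongr
      have : 0 ≤ E0 + |K| := by positivity
      rw [hA]; nlinarith
    nlinarith [mul_nonneg hE00 (abs_nonneg K), sq_nonneg E0, sq_nonneg |K|]
  have hJHi : ∫ x in Q3, (3 * ∑ i, JJ (n + 2) (U i) x) ≤ (3 * κ * E0) ^ 2 := by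
    rw [integral_const_mul, integral_finsetSum (f := fun i x => JJ (n + 2) (U i) x) _ (fun i _ => int_on (JJ_cont _ (hU i)))]
    simp only [fun i => JJ_int (n + 2) (hU i)]
    rw [← HsV_sq]
    have h1 : HsNormV (n + 2) U ^ 2 ≤ E0 ^ 2 := by gcongr; linarith
    have h2 : 1 ≤ κ ^ 2 := one_le_pow₀ hκ
    nlinarith [sq_nonneg E0]
  have hone : ∀ o, ∫ x in Q3, (dW l (w * (vv U o * vv U o)) x) ^ 2
      ≤ P * ((q * A) ^ (2 * (n + 1)) * (3 * κ * E0) ^ 4) := by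
    intro o
    refine quad_bound hgs hws (vv_smooth hU o) hgw c A hc0 hA1 n hn hwc hgA (q * A) rfl
      (fun x => 2 * JJ (n + 2) N x + 2 * JJ (n + 3) ρ0 x)
      (fun x => 3 * ∑ i, JJ (n + 2) (U i) x)
      ((continuous_const.mul (JJ_cont _ hN)).add (continuous_const.mul (JJ_cont _ hρ0)))
      (continuous_const.mul (continuous_finsetSum _ fun i _ => JJ_cont _ (hU i)))
      ?_ hJGi (3 * κ * E0) (by positivity) ?_ ?_ hJHi l hl
    · intro x b hb
      rw [hg, dW_add hN hρ0]
      have h1 := dW_sq_le_JJ (s := n + 2) hN b (by omega) x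
      have h2 := dW_sq_le_JJ (s := n + 3) hρ0 b (by omega) x
      simp only [Pi.add_apply]
      nlinarith [sq_nonneg (dW b N x - dW b ρ0 x)]
    · intro x hx b hb
      rw [mul_assoc]
      refine vv_abs_le hU b x (κ * E0) (by positivity) (fun i j => ?_) o
      refine (hsob (n + 2) (U i) (hU i) (b ++ [j]) (by simp; omega) x hx).trans ?_
      have := hUi i
      gcongr
    · intro x b hb
      exact vv_sq_le hU (n + 2) b (by omega) x o
  have hpt : ∀ x, (dW l (∑ o, vc μ lam o • (w * (vv U o * vv U o))) x) ^ 2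
      ≤ ∑ o, 10 * M * (dW l (w * (vv U o * vv U o)) x) ^ 2 := by
    intro x
    rw [dW_sum _ _ htermc, Finset.sum_apply]
    have h1 := sq_sum_le_card_mul_sum_sq (s := (Finset.univ : Finset (Option (Fin 3 × Fin 3))))
      (f := fun o => dW l (vc μ lam o • (w * (vv U o * vv U o))) x)
    refine h1.trans ?_
    rw [Finset.mul_sum]
    refine Finset.sum_le_sum fun o _ => ?_
    rw [dW_smul (hterm o)]
    simp only [Finset.card_univ, Fintype.card_option, Fintype.card_prod, Fintype.card_fin,
      Pi.smul_apply, smul_eq_mul, mul_pow]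
    have h2 : vc μ lam o ^ 2 ≤ M := by
      cases o with
      | none => simp only [vc, hM]; nlinarith [sq_nonneg (2 * μ)]
      | some p => simp only [vc, hM]; nlinarith [sq_nonneg lam]
    have h3 := mul_le_mul_of_nonneg_right h2 (sq_nonneg (dW l (w * (vv U o * vv U o)) x))
    push_cast
    nlinarith
  have hint : ∫ x in Q3, (dW l (∑ o, vc μ lam o • (w * (vv U o * vv U o))) x) ^ 2
      ≤ 100 * M * (P * ((q * A) ^ (2 * (n + 1)) * (3 * κ * E0) ^ 4)) := by
    have i1 : ∀ o, IntegrableOn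
        (fun x => 10 * M * (dW l (w * (vv U o * vv U o)) x) ^ 2) Q3 := fun o =>
      int_on (continuous_const.mul ((dW_smooth (hterm o) l).continuous.pow 2))
    have h1 : ∫ x in Q3, (dW l (∑ o, vc μ lam o • (w * (vv U o * vv U o))) x) ^ 2
        ≤ ∫ x in Q3, ∑ o, 10 * M * (dW l (w * (vv U o * vv U o)) x) ^ 2 := by
      apply setIntegral_mono
      · exact int_on ((dW_smooth (smooth_sum _ _ fun o _ => htermc o) l).continuous.pow 2)
      · exact integrable_finsetSum _ fun o _ => i1 o
      · exact hpt
    refine h1.trans ?_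
    rw [integral_finsetSum (f := fun o x => 10 * M * (dW l (w * (vv U o * vv U o)) x) ^ 2) _ (fun o _ => i1 o)]
    calc ∑ o, ∫ x in Q3, 10 * M * (dW l (w * (vv U o * vv U o)) x) ^ 2
        ≤ ∑ o : Option (Fin 3 × Fin 3),
          10 * M * (P * ((q * A) ^ (2 * (n + 1)) * (3 * κ * E0) ^ 4)) := by
          refine Finset.sum_le_sum fun o _ => ?_
          rw [integral_const_mul]
          exact mul_le_mul_of_nonneg_left (hone o) (by positivity)
      _ = _ := by
          rw [Finset.sum_const]
          simp only [Finset.card_univ, Fintype.card_option, Fintype.card_prod, Fintype.card_fin,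
            nsmul_eq_mul]
          push_cast
          ring
  refine hint.trans ?_
  have hAa : A ≤ a * (1 + E0) := by
    rw [hA, ha]
    have h1 : 0 ≤ κ * |K| * E0 := by positivity
    nlinarith
  have hpow : (1 + E0) ^ (2 * (n + 1)) ≤ 2 ^ (2 * (n + 1) - 1) * (1 + E0 ^ (2 * (n + 1))) := by
    have := add_pow_le (zero_le_one' ℝ) hE00 (2 * (n + 1))
    simpa using this
  have hAp : (q * A) ^ (2 * (n + 1))
      ≤ (q * a) ^ (2 * (n + 1)) * (2 ^ (2 * (n + 1) - 1) * (1 + E0 ^ (2 * (n + 1)))) := by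
    calc (q * A) ^ (2 * (n + 1)) ≤ (q * (a * (1 + E0))) ^ (2 * (n + 1)) := by gcongr
      _ = (q * a) ^ (2 * (n + 1)) * (1 + E0) ^ (2 * (n + 1)) := by rw [← mul_assoc, mul_pow]
      _ ≤ _ := by gcongr
  have hexp : E0 ^ (2 * (n + 3)) = E0 ^ (2 * (n + 1)) * E0 ^ 4 := by
    rw [← pow_add]; congr 1
  rw [hexp]
  calc 100 * M * (P * ((q * A) ^ (2 * (n + 1)) * (3 * κ * E0) ^ 4))
      ≤ 100 * M * (P * (((q * a) ^ (2 * (n + 1)) * (2 ^ (2 * (n + 1) - 1) *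
        (1 + E0 ^ (2 * (n + 1))))) * (3 * κ * E0) ^ 4)) := by gcongr
    _ = _ := by rw [mul_pow (3 * κ) E0 4]; ring

/-- estimate of the viscous-heating term.
Let `s > 7/2` be an integer, `1 ≤ |α| ≤ s`, `μ > 0`, `2μ + 3λ > 0`. Suppose
`ρ⁰ ∈ H^{s+1}(𝕋³)` with `‖ρ⁰‖_{H^{s+1}} ≤ K` and `ρ⁰ ≥ ρ̂ > 0`; let `N ∈ H^s` with
`N + ρ⁰ ≥ ρ̂/2`, `U ∈ H^s(𝕋³;ℝ³)` and `Θ ∈ H^{s+1}` (here: smooth periodic).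
Then for every `η > 0` there is `C_η = C(η,s,K,ρ̂,μ,λ)` with
`⟨∂^α{(1/(N+ρ⁰))(2μ|D(U)|²+λ(div U)²)}, ∂^αΘ⟩_{L²}
  ≤ η‖∇∂^αΘ‖²_{L²} + C_η(‖(N,U)‖⁴_{H^s} + ‖(N,U)‖^{2(s+1)}_{H^s})`. -/
theorem viscous_heating_estimate (s : ℕ) (hs : 7/2 < (s:ℝ)) (α : Fin 3 → ℕ)
    (hα1 : 1 ≤ ∑ i, α i) (hα : (∑ i, α i) ≤ s)
    (μ lam : ℝ) (hμ : 0 < μ) (hlam : 0 < 2 * μ + 3 * lam)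
    (K ρhat : ℝ) (hρhat : 0 < ρhat) :
    ∀ η > (0:ℝ), ∃ C > (0:ℝ),
      ∀ ρ0 : SF, SmoothS ρ0 → PerS ρ0 → HsNorm (s+1) ρ0 ≤ K → (∀ x, ρhat ≤ ρ0 x) →
      ∀ (N Θ : SF) (U : VF), SmoothS N → PerS N → SmoothS Θ → PerS Θ →
        SmoothV U → PerV U → (∀ x, ρhat / 2 ≤ N x + ρ0 x) →
        ip (mderiv α (fun y =>
              1 / (N y + ρ0 y) * (2 * μ * DabsSq U y + lam * (divv U y) ^ 2)))
           (mderiv α Θ)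
          ≤ η * (L2V (grad (mderiv α Θ))) ^ 2
            + C * ((HsNorm s N + HsNormV s U) ^ 4
                + (HsNorm s N + HsNormV s U) ^ (2 * (s + 1))) := by
  intro η hη
  have hs4 : 4 ≤ s := by
    by_contra h
    have h3 : s ≤ 3 := by omega
    have : (s : ℝ) ≤ 3 := by exact_mod_cast h3
    linarith
  obtain ⟨n, rfl⟩ : ∃ n, s = n + 2 := ⟨s - 2, by omega⟩
  obtain ⟨C, hC, hmain⟩ := heat_bound n (by omega) μ lam hμ K ρhat hρhat
  refine ⟨1 / (4 * η) * C, by positivity, ?_⟩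
  intro ρ0 hρ0 pρ0 hK _ N Θ U hN pN hΘ pΘ hU pU hlow
  obtain ⟨hFs, hFb⟩ := hmain ρ0 hρ0 hK N U hN hU hlow
  set F : SF := fun y =>
    1 / (N y + ρ0 y) * (2 * μ * DabsSq U y + lam * (divv U y) ^ 2) with hF
  have hFp : PerS F := by
    have hd : ∀ i j, PerS (pd j (U i)) := fun i j => pd_per (pU i) j
    intro x k
    simp only [hF, DabsSq, Dsym, divv, pN x k, pρ0 x k, fun i j => hd i j x k]
  have hlen := mword_length α
  obtain ⟨i, l, hil⟩ : ∃ i l, mword α = i :: l := by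
    cases h : mword α with
    | nil => rw [h] at hlen; simp at hlen; omega
    | cons i l => exact ⟨i, l, rfl⟩
  have hl : l.length ≤ n + 1 := by
    rw [hil, List.length_cons] at hlen; omega
  have h1 : mderiv α F = pd i (dW l F) := by rw [mderiv_eq, hil]; rfl
  have pT : PerS (mderiv α Θ) := by rw [mderiv_eq]; exact dW_per pΘ _
  rw [h1]
  refine (ip_le (dW_smooth hFs l) (mderiv_smooth hΘ α) (dW_per hFp l) pT i η hη).trans ?_
  have h2 := mul_le_mul_of_nonneg_left (hFb l hl) (by positivity : 0 ≤ 1 / (4 * η))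
  rw [← mul_assoc] at h2
  linarith
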